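/- arXiv:1812.11313 — 3 statements merged into one kernel-verified Lean document; each statement's English description precedes it below -/
import Mathlib

section
/- Every S-ring over the elementary abelian group C_3 × C_3 × C_3 is schurian. -/
/-!
Lying in the same basic set of an S-ring over `V = C₃³` is an equivalence relation `r` on `V` whose
measurable functions (those constant on classes) are closed under convolution (`SRel`); it has
to be shown that the classes of `r` are orbits of the automorphisms of `r` that fix `0`
(`SchurRel`). Both properties are invariant under linear maps of `V`, so the proof is a
classification of the relations up to linear equivalence, by successive refinement.

A table lists 68 colourings of `V`, starting with the one that distinguishes only `0` from the
other points; the first 21 have symmetric colour classes. Let a colouring `c` be measurable for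
`r`. If the colour classes are exactly the classes of `r`, then permutations stored
with the entry are automorphisms that act transitively on each colour class (`checkP_sound`).
Otherwise some colour class contains a proper subset `Y` that is a class of `r`. Put
`u = c ^ 2 + 1000 · 1_Y`. Then `u`, `u * u`, and a further convolution square built from `u` and
`u * u` are measurable, hence constant on `Y`. This excludes most subsets `Y`, and for
the remaining ones the resulting measurable functions refine, up to a linear map, a later
colouring of the table. Downward induction on the index of the entry finishes the proof.

To keep the number of subsets `Y` small this is done in two stages. The first one applies the
refinement to the symmetrization of `r`, with classes `X ∪ -X`, and finds an entry whose colour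
classes are the classes of the symmetrization (`step1`, `schurRel_of_sym`). In the second one
each colour class stays between a class `X` of `r` and `X ∪ -X`, so that only a choice
of signs has to be enumerated (`step2`, `schurRel_of_between`).

The finite verification is carried out by the kernel on natural numbers: a function on `V` is
packed into the digits of one number, and convolution becomes multiplication of numbers
(`sq_digit`). The lemma `refute_sound` connects this arithmetic with `SRel`.
-/

open scoped Pointwise

namespace SRingPaper

/-- The number of representations of `z` as `x * y` with `x ∈ X`, `y ∈ Y`
(the structure constant `c^Z_{X,Y}` evaluated at `z ∈ Z`). -/
noncomputable def structConst {G : Type*} [Group G] (X Y : Set G) (z : G) : ℕ :=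
  Nat.card {p : G × G // p.1 ∈ X ∧ p.2 ∈ Y ∧ p.1 * p.2 = z}

/-- An S-ring (Schur ring) over a finite group `G`, given by its partition of `G`
into basic sets: the partition contains `{1}`, is closed under taking inverses,
and the structure constants are constant on each class (equivalently, the
ℤ-span of the indicator elements of the classes is a subring of ℤG). -/
structure SRing (G : Type*) [Group G] [Finite G] where
  parts : Set (Set G)
  nonempty_mem : ∀ X ∈ parts, X.Nonempty
  exists_mem : ∀ g : G, ∃ X ∈ parts, g ∈ X
  eq_of_mem : ∀ X ∈ parts, ∀ Y ∈ parts, ∀ g : G, g ∈ X → g ∈ Y → X = Y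
  one_mem : ({1} : Set G) ∈ parts
  inv_mem : ∀ X ∈ parts, X⁻¹ ∈ parts
  structConst_const : ∀ X ∈ parts, ∀ Y ∈ parts, ∀ Z ∈ parts, ∀ z ∈ Z, ∀ z' ∈ Z,
    structConst X Y z = structConst X Y z'

/-- `R(X) = {(g, x*g) : x ∈ X, g ∈ G}`, the edge set of the Cayley graph `Cay(G,X)`. -/
def RSet {G : Type*} [Group G] (X : Set G) : Set (G × G) :=
  {p | ∃ x ∈ X, p.2 = x * p.1}

/-- The image of a binary relation under a map applied to both coordinates. -/
def mapRel {G G' : Type*} (f : G → G') (R : Set (G × G)) : Set (G' × G') :=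
  (fun p : G × G => (f p.1, f p.2)) '' R

section Defs

variable {G G' : Type*} [Group G] [Finite G] [Group G'] [Finite G']

/-- A combinatorial isomorphism from the S-ring `A` to the S-ring `B`. -/
structure IsIso (A : SRing G) (B : SRing G') (f : G → G') : Prop where
  bijective : Function.Bijective f
  image_eq : (fun X : Set G => mapRel f (RSet X)) '' A.parts = RSet '' B.parts

/-- An algebraic isomorphism from the S-ring `A` to the S-ring `B`:
a bijection between the basic sets preserving all structure constants. -/
structure IsAlgIso (A : SRing G) (B : SRing G') (φ : Set G → Set G') : Prop where
  bijOn : Set.BijOn φ A.parts B.parts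
  structConst_eq : ∀ X ∈ A.parts, ∀ Y ∈ A.parts, ∀ Z ∈ A.parts,
    ∀ z ∈ Z, ∀ z' ∈ φ Z, structConst X Y z = structConst (φ X) (φ Y) z'

/-- The algebraic isomorphism `φ` is induced by the combinatorial isomorphism `f`
(i.e. `φ = φ_f`). -/
def InducedBy (A : SRing G) (φ : Set G → Set G') (f : G → G') : Prop :=
  Function.Bijective f ∧ ∀ X ∈ A.parts, mapRel f (RSet X) = RSet (φ X)

/-- `A` is separable with respect to the class `𝒦_A` of finite abelian groups. -/
def SepAbelian (A : SRing G) : Prop :=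
  ∀ (H : Type*) [CommGroup H] [Finite H] (B : SRing H) (φ : Set G → Set H),
    IsAlgIso A B φ → ∃ f : G → H, InducedBy A φ f

/-- `A` is separable with respect to the class `𝒦_C` of finite cyclic groups. -/
def SepCyclic (A : SRing G) : Prop :=
  ∀ (H : Type*) [Group H] [Finite H], IsCyclic H → ∀ (B : SRing H) (φ : Set G → Set H),
    IsAlgIso A B φ → ∃ f : G → H, InducedBy A φ f

/-- `A` is schurian: `A = V(K, G)` for some group `K` with `G_right ≤ K ≤ Sym(G)`,
i.e. the basic sets of `A` are the orbits on `G` of the stabilizer of `1` in `K`. -/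
def IsSchurian (A : SRing G) : Prop :=
  ∃ K : Subgroup (Equiv.Perm G),
    (∀ g : G, Equiv.mulRight g ∈ K) ∧
    A.parts = {X : Set G | ∃ g : G, X = {h : G | ∃ f ∈ K, f 1 = 1 ∧ f g = h}}

lemma mapRel_comp {A B C : Type*} (f : B → C) (g : A → B) (R : Set (A × A)) :
    mapRel (f ∘ g) R = mapRel f (mapRel g R) := by
  simp only [mapRel, Set.image_image]
  rfl

lemma mapRel_id {A : Type*} (R : Set (A × A)) : mapRel (fun x => x) R = R := by
  simp [mapRel]

/-- The automorphism group `Aut(A)` of an S-ring, as a subgroup of `Sym(G)`. -/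
def autSubgroup (A : SRing G) : Subgroup (Equiv.Perm G) where
  carrier := {f : Equiv.Perm G | ∀ X ∈ A.parts, mapRel f (RSet X) = RSet X}
  one_mem' := by
    intro X hX
    have h : ⇑(1 : Equiv.Perm G) = fun x => x := rfl
    rw [h, mapRel_id]
  mul_mem' := by
    intro f g hf hg X hX
    have h : ⇑(f * g) = ⇑f ∘ ⇑g := rfl
    rw [h, mapRel_comp, hg X hX, hf X hX]
  inv_mem' := by
    intro f hf X hX
    conv_lhs => rw [← hf X hX]
    rw [← mapRel_comp]
    have h : ⇑f⁻¹ ∘ ⇑f = fun x => x := by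
      funext x
      simp
    rw [h, mapRel_id]

/-- `A` is a normal S-ring: `G_right` is normal in `Aut(A)`. -/
def IsNormalSRing (A : SRing G) : Prop :=
  ∀ f ∈ autSubgroup A, ∀ g : G,
    ∃ g' : G, f * (Equiv.mulRight g : Equiv.Perm G) * f⁻¹ = Equiv.mulRight g'

/-- The partition of `G` into the orbits of `K ≤ Aut(G)`: the basic sets of the
cyclotomic S-ring `cyc(K, G)`. -/
def cycParts (K : Subgroup (MulAut G)) : Set (Set G) :=
  {X : Set G | ∃ g : G, X = {h : G | ∃ f ∈ K, f g = h}}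

/-- `H` is an `A`-subgroup: `H` is a union of basic sets of `A`. -/
def IsASubgroup (A : SRing G) (H : Subgroup G) : Prop :=
  ∀ X ∈ A.parts, X ⊆ (H : Set G) ∨ Disjoint X (H : Set G)

/-- `rad(X) = {g ∈ G : gX = Xg = X}`. -/
def radSet (X : Set G) : Set G :=
  {g : G | (fun x => g * x) '' X = X ∧ (fun x => x * g) '' X = X}

/-- A subset of a cyclic group is highest if it contains a generator. -/
def IsHighest (X : Set G) : Prop :=
  ∃ x ∈ X, ∀ g : G, g ∈ Subgroup.zpowers x

/-- `A` is the `S`-wreath product with respect to the section `S = U/L`: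
`U` and `L` are `A`-subgroups, `L ≤ U`, `L` is normal in `G`, and every basic
set outside `U` has `L` in its radical. -/
def IsSWreath (A : SRing G) (U L : Subgroup G) : Prop :=
  IsASubgroup A U ∧ IsASubgroup A L ∧ L ≤ U ∧ L.Normal ∧
    ∀ X ∈ A.parts, ¬ X ⊆ (U : Set G) → (L : Set G) ⊆ radSet X

/-- `AU` is the restriction `A_U` of `A` to the `A`-subgroup `U`. -/
def IsRestriction (A : SRing G) (U : Subgroup G) (AU : SRing ↥U) : Prop :=
  AU.parts = {Y : Set ↥U | ∃ X ∈ A.parts, X ⊆ (U : Set G) ∧ Y = (Subtype.val ⁻¹' X : Set ↥U)}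

/-- `AQ` is the quotient S-ring `A_{G/L}`. -/
def IsQuotientSRing (A : SRing G) (L : Subgroup G) [L.Normal] (AQ : SRing (G ⧸ L)) : Prop :=
  AQ.parts = {Y : Set (G ⧸ L) | ∃ X ∈ A.parts, Y = ((QuotientGroup.mk : G → G ⧸ L) '' X)}

/-- The orbit of a pair under a permutation group, for the definition of 2-equivalence. -/
def orb2 {Ω : Type*} (K : Subgroup (Equiv.Perm Ω)) (p : Ω × Ω) : Set (Ω × Ω) :=
  {q : Ω × Ω | ∃ f ∈ K, (f p.1, f p.2) = q}

/-- Two permutation groups are 2-equivalent if they have the same orbits on `Ω × Ω`. -/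
def TwoEquiv {Ω : Type*} (K K' : Subgroup (Equiv.Perm Ω)) : Prop :=
  {S : Set (Ω × Ω) | ∃ p, S = orb2 K p} = {S : Set (Ω × Ω) | ∃ p, S = orb2 K' p}

/-- A permutation group is 2-isolated if it is the only group 2-equivalent to it. -/
def TwoIsolated {Ω : Type*} (K : Subgroup (Equiv.Perm Ω)) : Prop :=
  ∀ K' : Subgroup (Equiv.Perm Ω), TwoEquiv K K' → K' = K

end Defs

/-- `Aut(A)^S` for the section `S = G/N`: the permutations of `G/N` induced by
automorphisms of `A` permuting the `N`-cosets. -/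
def inducedOnQuotient {G : Type*} [Group G] [Finite G] (A : SRing G) (N : Subgroup G)
    [N.Normal] : Set ((G ⧸ N) → (G ⧸ N)) :=
  {q : (G ⧸ N) → (G ⧸ N) | ∃ f : Equiv.Perm G, f ∈ autSubgroup A ∧
    (∀ u v : G, (u : G ⧸ N) = (v : G ⧸ N) → ((f u : G) : G ⧸ N) = ((f v : G) : G ⧸ N)) ∧
    ∀ u : G, q (u : G ⧸ N) = ((f u : G) : G ⧸ N)}

end SRingPaper

noncomputable section

/-! ### The evaluator -/

namespace ElemThree

/-- `List.all`, spelled with recursors so that the kernel evaluates it quickly. -/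
def allR (l : List ℕ) (f : ℕ → Bool) : Bool :=
  List.rec true (fun a _ ih => Bool.rec false ih (f a)) l

/-- `List.any`, spelled with recursors. -/
def anyR (l : List ℕ) (f : ℕ → Bool) : Bool :=
  List.rec false (fun a _ ih => Bool.rec ih true (f a)) l

/-- `List.filter`, spelled with recursors. -/
def filterR (l : List ℕ) (f : ℕ → Bool) : List ℕ :=
  List.rec [] (fun a _ ih => Bool.rec ih (a :: ih) (f a)) l

/-- Lazy conjunction. -/
def andR (a b : Bool) : Bool := Bool.rec false b a

/-- Lazy disjunction. -/
def orR (a b : Bool) : Bool := Bool.rec b true a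

/-- Boolean negation. -/
def notR (a : Bool) : Bool := Bool.rec true false a

/-- Lazy implication. -/
def impR (a b : Bool) : Bool := Bool.rec true b a

/-- Call-by-value application: the kernel evaluates `n` to a literal before it calls `k`. -/
def force {α : Type} (n : ℕ) (k : ℕ → α) : α :=
  Nat.rec (k 0) (fun m _ => k (Nat.succ m)) n

/-- The list `f l` is computed entry by entry and then handed to the continuation. -/
def tab (f : ℕ → ℕ) (l : List ℕ) : (List ℕ → Bool) → Bool :=
  List.rec (fun k => k []) (fun x _ ih k => force (f x) fun a => ih fun l => k (a :: l)) l

/-- Entry `n` of a table with entries below `32`, packed into one number. -/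
def look (T n : ℕ) : ℕ := Nat.mod (Nat.div T (Nat.pow 32 n)) 32

/-- The codes of the elements of `C₃³`: `(a, b, c)` has code `a + 3 b + 9 c`. -/
def codes : List ℕ :=
  [0, 1, 2, 3, 4, 5, 6, 7, 8, 9, 10, 11, 12, 13, 14, 15, 16, 17, 18, 19, 20, 21, 22, 23, 24, 25, 26]

/-- One code from each pair `{x, -x}` with `x ≠ 0`. -/
def half : List ℕ := [1, 3, 4, 5, 9, 10, 11, 12, 13, 14, 15, 16, 17]

/-- The packed subtraction table of codes. -/
def subT : ℕ :=
  1869006481835856931002640405830076887602885168941715575801214194519683848114080751588481270309287950676725765508148463720194373114770645860413561157905712344769853438413656420661531899423235586950471117455529437153344294594409713842439618122975073317875327957898865209017804979416339729302071143328682420619672215975356478174951379203059872909309154422670784900683799256422889395789471721866316536029017474764313942067968529968276396663909153760089512929422853680619103981851870282222849033645844302745095058337297259751863311231953573873099152574081424994505286739160926650310477153384183615619329921386859559863162276590043133400800686337008737310773288231036100109455062933412224743936384516655658013231724662740515030176813864580031242334757632908345767752760739163965970050966308734181509315575055045425386945591857675530470038296496978459241429882792490057639462771636574388507863935652867968680770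49302039473933215848490966967746455628538141347171661778965088012211030753865723112155326810589547572566119154654079393521825342922934063019851386527224924232934131977920864896921353939256384

/-- Subtraction of codes. -/
def subC (a b : ℕ) : ℕ := look subT (Nat.add (Nat.mul 27 a) b)

/-- Negation of codes. -/
def negC (a : ℕ) : ℕ := look subT a

/-- The radix of the packed functions. -/
def radix : ℕ := 18446744073709551616

/-- The packed table of `pos`. -/
def posT : ℕ := 35515466961903997436481869578858093188669590857941815955887882496

/-- The digit position `a + 6 b + 36 c` of the value at the point `(a, b, c)`. As `6 > 2 + 2`,
the position of a pair of points determines their sum. -/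
def pos (x : ℕ) : ℕ := Nat.mod (Nat.div posT (Nat.pow 256 x)) 256

/-- The unit of the digit of the point with code `x`. -/
def mono (x : ℕ) : ℕ := Nat.pow radix (pos x)

/-- The number with digits `f x` at position `pos x`. -/
def pack (f : ℕ → ℕ) : ℕ :=
  List.rec 0 (fun x _ s => Nat.add (Nat.mul (f x) (mono x)) s) codes

/-- Adds to each digit the digit `k` places further up. -/
def fold (k n : ℕ) : ℕ := Nat.add n (Nat.div n (Nat.pow radix k))

/-- For a packed function, the digits of `sq N` at the positions `pos z` are the values of its
convolution square: ordinary multiplication, and then the exponents are reduced modulo `3`. -/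
def sq (N : ℕ) : ℕ := fold 108 (fold 18 (fold 3 (Nat.mul N N)))

/-- Appends a lowest digit `s`, which carries no information. The hash of a numeral depends
on its lowest digit only, so that without `s` the kernel caches would degenerate. -/
def salted (n s : ℕ) : ℕ := Nat.add (Nat.mul n radix) (Nat.mod s radix)

/-- The value at the point with code `x` of a packed and salted function. -/
def dig (N x : ℕ) : ℕ := Nat.mod (Nat.div N (Nat.pow radix (Nat.succ (pos x)))) radix

/-- A colouring of the 27 points, packed as a table; generators of a group of automorphisms of
the colouring, packed as tables; and hints for the two case distinctions. A hint
`10 ^ 7 * key + 100 * g + j` refers to the linear map `g` and the entry `j`. -/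
structure Entry where
  color : ℕ
  perms : List ℕ
  hints1 : List ℕ
  hints2 : List ℕ

/-- Representatives of the S-rings over `C₃³`, those with symmetric basic sets first; each
refinement of an entry is equivalent to a later entry. That the list is complete is a consequence
of the checks below. -/
def table : List Entry := [
  ⟨1405036869867100752364901604879559066656,
    [23808649569630575386624092925901734536448, 21105218879643837869911197207571885438560,
     26065274645007085793154870954723126609152],
    [60972301, 780902703, 2780975603, 3500902704, 1661048503, 2381048504, 4380975604, 5100664302,
     2626620885903, 2627341123605, 2629341266605, 2628221196405, 10496060958803, 10496781191105,
     10498781123505, 10497661263905, 13122620885904, 5263421031703, 5264141266705, 5266141191005,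
     5265021120805, 7889981031704, 15759420958804, 18385980243102, 167813181104603, 167813901045305,
     167815900977705, 167814781047905, 170439741849805, 170442461496305, 170441341420605,
     178309181920205, 178309901423305, 178311901347605, 180938061471605, 173076541847205,
     173077261493605, 173078141350305, 175706541320405, 183576861396005, 671170621177503,
     671171340902205, 671173341045205, 671172220904805, 673797181777005, 673797901423405,
     673798781490705, 681666621847105, 681669341418005, 681668221350405, 684296621466205,
     676433981774405, 676434701345005, 676436701496105, 679064861323105, 686932301398705,
     838983741104604, 841613740883005, 849482060888405, 852107020899205, 844251420885705,
     846876380904605, 854744700901905, 335708221250403, 335708940977805, 335710940902105,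
     335709820972305, 338334781922905, 338335501493505, 338337501417805, 346204221774305,
     346204941345105, 346205821420505, 348835101468905, 340971581920005, 340974301347805,
     340973181490805, 343600461325805, 351471021393305, 503521341250404, 506150221034205,
     514021661031505, 516645501045005, 508788141028805, 511411981050405, 519283421047705,
     1006878781177504, 1009509660958605, 1017378220955905, 1020004060972105, 1012144460961305,
     1014770300977505, 1022638860974805, 1174691900251202, 21299260667203, 21299981272105,
     21301981204505, 21300861274705, 23925821428605, 23928541706905, 23927421631205, 31795261355805,
     31795981634005, 31796861701305, 34425260664305, 26562621501705, 26563341704105, 26565341628405,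
     29191500815505, 37062940739905, 189112381639205, 189115101488205, 189113981412505,
     191743260667007, 199608381687805, 194375741031705, 204872460245807, 692469821709605,
     692470541339605, 692472541482605, 695096381469105, 702965820667205, 705593980388907,
     697736620810107, 860285261909005, 870781660324107, 873409820540306, 868172861925205,
     876045740462206, 357007421636605, 357008141342405, 357009021409705, 359633981250405,
     367505740742607, 362270781760705, 364900060321407, 524823981757805, 537943101774005,
     530085500402407, 532714780610506, 540582220462106, 1028182301833405, 1030805260253907,
     1041302860540406, 1036071340610706, 1043937341849605, 84541500740103, 84542221129005,
     84544221272005, 84543101131605, 87168061499005, 87168781633905, 87170781558205, 95037501425905,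
     95040221628605, 95039101561005, 97666380669705, 89804861353105, 89805581555705, 89806461631105,
     92435740812805, 100304300737205, 252354621566405, 252355341482805, 252356221339505,
     254981181906505, 262850621104605, 265479900316007, 257620300815507, 755712061636505,
     755714781409905, 755713661342305, 758338620885905, 766212380739907, 760975421614905,
     763602700248507, 923528621903605, 926153340397007, 936652060613206, 931417420464806,
     939284541922505, 420249661563805, 420250381488105, 420252381412405, 422879660664307,
     430745661396205, 425513020740105, 436010620391607, 588067101760505, 598559500256607,
     601188780613406, 595952701779405, 603824460535006, 1091422541836105, 1104542781846905,
     1096686300326807, 1099313580464906, 1107183900534906, 105840700667204, 108469581690305,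
     116340141684905, 118963981117905, 111108381687605, 113732221123305, 121602781120605,
     273657261101705, 284151420405107, 286780700102906, 281543741706505, 289415500170506,
     777013581107105, 779640540332207, 790138140175806, 784904620100406, 792770621703805,
     944825101126005, 947455260321606, 955324700394506, 957949660686106, 957948540759006,
     957951260102902, 950087741709205, 441553181104405, 454671421701105, 446812940259307,
     449442220173306, 457310540097606, 609364701131405, 611988541714605, 619860300389206,
     614627660243406, 625122060826606, 625122940753706, 625123660097602, 1112721021128705,
     1115349420319106, 1123215421711905, 1117986220246206, 1120610060829406, 1120612060683606,
     1120612780100402, 1298923500664301, 43253820813003, 43254541204605, 43256541128905,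
     43255421199105, 45880381426005, 45881101704205, 45881981560905, 53749821353205, 53750541555605,
     53752541706705, 56380700667005, 48517181498805, 48519901558405, 48518781701405, 51147180810105,
     59015500742605, 211066941712305, 211067661409805, 211069661342205, 213693500813005,
     221566380737207, 216330301323305, 218958460394307, 714424381563705, 714425101412605,
     714425981488005, 717053260669707, 724920381833605, 719687741177505, 730186460318707,
     882241821906305, 895360061919805, 887501580251207, 890129740537706, 898000300608006,
     378961981709405, 378964701339705, 378963581482705, 381588541542005, 389457980958805,
     392085260243107, 384229660812807, 546777421763205, 549404380329507, 559901100467606,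
     554669340537606, 562534461776705, 1050135981830705, 1060630140399707, 1063257420467506,
     1058022461852305, 1065896220607806, 64553020813004, 67183021539105, 75053341541805,
     77678301263705, 69818701544505, 72443661269105, 80313981266405, 232368461252905,
     245488701555305, 237632220337607, 240260380173106, 248128940097706, 735727901250205,
     746220300264707, 748848460103006, 743613501560705, 751486380170606, 903538301271805,
     906163261563405, 914036140243506, 908803500316406, 919296780753806, 919298780826706,
     919299500097702, 400264621247505, 402889340410507, 413386060175906, 408155420100206,
     416020541558005, 568075021277205, 570705180391806, 578570301568805, 573341980318906,
     575966940829206, 575965820683406, 575968540100202, 1071434461274505, 1074060620394606,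
     1081930060248806, 1084555020759106, 1084555900686206, 1084556620103002, 1076695101566105,
     1257635820810101, 127795260740104, 130426141614705, 138293581617405, 140919421190805,
     133062061612005, 135687901196205, 143555341193505, 295612701177305, 298235660262007,
     308734380176006, 303500620100306, 311367741630905, 798969261174605, 812088381628205,
     804230780407807, 806858060173206, 814729500097506, 966781661198905, 969407820246106,
     977274941636305, 972044620391906, 974669580683506, 974670460829306, 974671180100302,
     463505741180005, 474002140334907, 476629420103106, 471393341633605, 479267100170406,
     631318141204305, 633946540248906, 641815980321806, 644439820686306, 644441820759206,
     644442540103102, 636579901641705, 1134674701201605, 1137300541639005, 1145174300316206,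
     1139941660389106, 1150436060753606, 1150434940826506, 1150437660097502, 1320878060737201,
     149094460259302, 1006469101101701, 671006701247501, 1174364141174601, 1336913900883001,
     1331681261028801, 1339550700955901, 1342175660899201, 1342174541045001, 1342176540972101],
    [1158733940348421, 1163988900858721, 1156128261879321, 655460261806421, 660711940275521,
     652852340785821, 498205540567121, 490345941369021, 495597620931621, 991085060712921,
     996337781952221, 988480420421321, 833831381077421, 825970740494221, 831225701514821,
     330554421441921, 322697061004521, 327949780640021, 1305824100575221, 1311076820866821,
     1303216181668721, 1140709781838821, 1140705861612021, 645293461620121, 645289541393321,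
     480175220340321, 461860981628221, 978313621474321, 978309701903621, 815803301069321,
     797489060388921, 312526341652521, 294212100972121, 131705701636321, 136958420615721,
     129097780761521, 1243236821595821, 1248488500502321, 1240631140793921, 1085982101401421,
     1085978181830721, 580100501765921, 580096581539121, 417590181579621, 399275940899221,
     910473621547221, 910469701320421, 753214980267421, 734900741555321, 249939060996421,
     231624820316021, 69118420688621, 74370101563421, 66512740542821, 1233066100356521,
     1225208741377121, 1230460421158421, 1067954020559021, 1049639781846921, 564678101798321,
     546363861117921, 389109141109821, 389105220883021, 900302901142221, 881988660461821,
     719482260672421, 719478341101721, 213600660964021, 213596740737221, 58947701417621,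
     51090341126021, 56342020251221, 1285833780721021, 1291088741741621, 1283229140648121,
     1125974421693021, 1125970501466221, 617445781328521, 617441861757821, 460187140923521,
     441872900243121, 960931221911721, 960927301684921, 795812981725421, 777498741045021,
     292539300413221, 274225061701121, 111715380469921, 116970340834421, 109110741709221,
     1275666341304221, 1267805700283621, 1273058421522921, 1110552021288021, 1092237780607621,
     607275060486121, 588960821774021, 426454420891121, 426450500664321, 942903141944121,
     924588901263721, 759474581255621, 759470661028821, 264058260818221, 264054341247521,
     101547940397021, 93687301344721, 98940021271821, 1213078021450021, 1205218421231321,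
     1210473380429421, 1047963701871221, 1029649461190821, 544690021215121, 526375780534721,
     361261460745321, 361257541174621, 880315860631921, 862001621919821, 704746901036921,
     704742980810121, 196218261182721, 196214340955921, 38959621198921, 31100020324121,
     36354981490521, 1014227061863121, 1019482020405121, 1011621380769621, 510953380696721,
     516205061790221, 508345460332221, 353698661425721, 345839060915421, 351090740478021,
     846578180259321, 851830900842521, 843973541936021, 689324500623821, 681463861352821,
     686718821061221, 186047540988321, 178190180550921, 183442901498621]⟩,
  ⟨1405038167941354071698036405637231969312,
    [34927779113005252069958212270255758194144, 28255671747906575887024667034130944689600],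
    [60753608, 780664311, 2780739911, 3501132210, 1660815511, 2381205210, 4381199710, 5100664306,
     2626620388911, 2627340100412, 2628220175812, 10496060245811, 10496780170512, 10498780102912,
     13122621563710, 5263420321411, 5266140173312, 5265020097612, 7889981566310, 15759421709410,
     18385980388906, 167813180615711, 167813900462112, 167815900613212, 170439740321612,
     173076540243412, 671170620472611, 671171340464912, 671172220540312, 681666620394512,
     676433980246212, 838983740405410, 335708220548211, 335710940610712, 335709820535012,
     338334780319112, 346204220389212, 503521340408010, 1006878780332410, 1174691900615706,
     21299260667208, 23928540610511, 31796860540411, 26563340462211, 189113980181211,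
     191743261760510, 199608380335311, 204872460245810, 692472540184111, 695096380262311,
     705593980388910, 697736621903610, 870781660615710, 876045740462206, 357008140178611,
     367505741836110, 362270780408011, 364900060321410, 530085500548210, 532714780610506,
     1030805260472610, 1041302860540406, 84541500740108, 87170780613411, 95039100534911,
     89805580464811, 252356220111111, 262850620259711, 265479901774010, 257620300815510,
     755714780105611, 758338620405411, 766212380739910, 763602701925210, 926153341344710,
     931417420464806, 420250380108511, 422879660664310, 425513020332411, 436010621849610,
     598559501495910, 601188780613406, 1096686301420310, 1107183900534906, 105840700667204,
     284151420405107, 779640540332207, 957951260667004, 446812940259307, 625123660742604,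
     1120612780810104],
    [1310720664322]⟩,
  ⟨2810073739734201504729803208624138388512,
    [36437742275679089007090319902256472982784, 35076649318596780209100754167157706791008,
     12951143885785656981372524493737322124480],
    [60981004, 780902703, 2780975603, 3500902704, 1661048503, 2381048504, 4380975604, 2626560955906,
     13122561275610, 7889921129810, 18385921129809, 170439681275410, 180935681471612,
     175703041320412, 673797121205210, 684293121466212, 679060481323112, 841610240737212,
     852106240664311, 846873600812811, 338334721126910, 348830721468912, 343598081325812,
     506147840742612, 516643840669711, 511411200810111, 1009505280739912, 1020001280667011,
     1014768640815511, 1193077760902709, 23925760838010, 34421760664312, 29189120815512,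
     191738880838009, 695096321323312, 705592321034211, 359633921104612, 364897280885711,
     1030804481174611, 87168000835310, 97664000669712, 92431360812812, 254981121760712,
     265477120958611, 758338560885912, 763601921028811, 926151681252911, 422876160835309,
     108467201398712, 118963201101711, 113730561107111, 779637760739911, 957946880762309,
     1120609280840609, 1298918400664306, 45880320840710, 56376320667012, 51143680810112,
     213693440667212, 218956800961311, 717050880840709, 381588481542012, 392084480883011,
     549401601104411, 67179521393312, 77675521250211, 72442881247511, 402887680742611,
     575964160835209, 1084554240765009, 1257630720810106, 130421761396012, 140917761180011,
     135685121177311, 298234880737211, 974668800837909, 644439040767709, 1320872960737206,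
     167480321121409, 1006464001101706, 671001601247506, 1174359041174606, 1336908800883006,
     1331676161028806],
    [2616320664323]⟩,
  ⟨4127295886403861031567399059960055759904,
    [29551088947781714213798666168828910699712, 36434485263511133887589743370936455313600],
    [60905011, 781631717, 2781704617, 3500913510, 2626621177517, 10496061250417, 13122620912910,
     167813181652717, 178311900176011, 335708221658217, 338335500103111, 503521340335110,
     84541500902117, 87170780613411, 252355340686311, 265479900899210, 422879661684910,
     430745660321811, 598559500475310, 43253820899517, 53750540467611, 213693500248911,
     221566380883010, 378964700759211, 392085261263710, 549404381350110, 127795261847110,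
     298235661355510, 474002140334910, 1601204308, 671170560664308],
    [221027940103124]⟩,
  ⟨2766166418720107177677007142085563810848,
    [16016209100514475791173735260959701809728, 26235890010322362847809305283274601727520],
    [61045210, 781637117, 2781642617, 3501278010, 2626621199117, 2629340176012, 10496061204617,
     10496780103112, 13122621714810, 167813181652717, 167815900613412, 178309180321812,
     335708221658217, 335708940467612, 338334780248912, 503521340335110, 84541501482610,
     87168780672417, 95040220750717, 252355340883017, 254981181725417, 265479900316010,
     420252381031517, 422879661830710, 430745661730817, 598559500475310, 43253820607810,
     45881101247517, 53752541250217, 211067661255617, 213693500899217, 221566380737210,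
     378964701261017, 389457981047717, 392085261846910, 549404381350110, 127795260316209,
     298235660262009, 474002140334909, 1601045008, 5264960664308, 671172161028808],
    [221027940103125, 671109440262026, 327680664327]⟩,
  ⟨4171246002033370380150389132182959457312,
    [24170051274689058897068689905568985426560, 22262472917874635759862719112830578168064,
     22304225834627032037202950235643929305216, 36444131258060853215482717017008590095424],
    [60750917, 780672419, 2780739919, 3500664312, 2626620267419, 2627340478312, 10496060318719,
     10498780624012, 13122620243112, 21299260259311, 23928540610511, 31795980462111, 1600664312,
     5264960750917, 167814720677817, 173078080478312, 335709761101717, 340973120624012,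
     503522880243112, 671170560259311, 755712000610511, 714424320462111],
    [225600664328]⟩,
  ⟨2810075037808454824062938009381811291168,
    [32355557196297302581337728980912511819968, 12948531056418821892321664033197656179936,
     32234597724756356862454132494018204994752],
    [61048510, 780664311, 2780739911, 3501132210, 1660815511, 2381205210, 4381199710, 2626561423915,
     13122560815819, 7889920740119, 18385920885916, 170439681112819, 673797121205210,
     852106240664311, 338334721115419, 1014768640815511, 1193077761048510, 23925760739919,
     191738880739916, 87168000823619, 422876160664316, 779637760739911, 957946881199710,
     1120609281132210],
    [445783040664329, 283386880815529, 520115200739929, 1305600664333, 1310720664333]⟩,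
  ⟨4129956941118852783695411370992186983456,
    [33674115094181201329480610552477834617024, 15089671955714459372808562184268065065408,
     30739470610289686559933616837116171453568],
    [61564310, 781928810, 2781418510, 3500835309, 2626620899211, 335708220766911, 338335500991311,
     338337500918311, 84541500772311, 87168780840111, 87170780767111, 420250380826611,
     420252380753611, 10496001028810, 15759360899211, 178309120664310, 681666560918311,
     854743040772311, 31795200840111, 204871680826611, 870778880767111, 53749761174610,
     221562880664309, 730183680753611, 80312320766911, 746219520991311],
    [320664330]⟩,
  ⟨4127295926968680276649671770811720041504,
    [18644605327788349963877207618407899112160, 18738805518601864233872100038824168588416],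
    [60750917, 780818219, 2780812819, 3501496715, 2626620413219, 10496060391619, 13122620621315,
     167813181652717, 335708221658217, 503521340335110, 84541500902117, 252355340883017,
     265479900607615, 422879660664315, 430745661730817, 598559500475310, 43253820899517,
     213693500899217, 221566381466215, 378964701261017, 392085260243115, 549404381350110,
     127795261847110, 298235661355510, 474002140334910, 1600664313],
    [221027940103134, 5243200621138, 20800262038, 81920262038, 327680621138]⟩,
  ⟨5491086449407039963925244197312134153248,
    [28734267659598971813845765585409539876416, 29679984833664473608262588400110779013376,
     15590905206510134722581260599022204421248],
    [61569616, 781423816, 2781496716, 3500664314, 2626621177517, 335708220667217, 338335501036917,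
     338337500667017, 84541501031717, 87168780672417, 87170781177317, 420250381182717,
     420252381031517, 10496001028810, 178309120664310, 53749761174610, 5263361684910,
     676433921830710, 26562561320410],
    [422054500179239, 826980109139, 320664335, 1361920109139, 430080179239]⟩,
  ⟨5491089045555546602591513798827479958560,
    [29589392236769347328254458974372618082560, 15666677695173771181131081180287377409152,
     35532987173209617240747640575904758676192],
    [61115419, 780664319, 2780823619, 3500664316, 2626620388919, 335708220402419, 84541501031717,
     87170781177317, 420250381182717, 10496001320415, 5263361177317, 676433921031717,
     26562561182717],
    [422054500179245, 826980619450, 321684946, 167782401684946, 51200619450, 430080179245,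
     1310720619450]⟩,
  ⟨4257690080594229018760776628709615502368,
    [18306815260805972811530360991366254888000, 28236279911018870963617310209426467097792,
     25335987427603123383370853051832507499584],
    [61494017, 2721569817, 2626560664319, 13122560815819, 170439681112819, 673797121569817,
     5263360815819, 340971521494017, 26562560664319, 89804800745319],
    [178344961034540, 138240664349, 105041920664340, 1167360664349, 1310720664349]⟩,
  ⟨6981319741767571884880192339672118101024,
    [22303839953278795945222768489483906130048, 30787360298919413070376682283593497843808,
     18306815260805972811530360991366254888000, 31034475989032572041998357611145093778624],
    [60813019, 780672419, 2780739919, 2626560672419, 13122560813019, 23925760739919, 5263360813019,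
     173076480672419, 340971520739919, 671170560813019, 755712000739919, 714424320672419],
    [2661148441, 320664355, 343040664355, 225280664355, 2048000664355]⟩,
  ⟨5488425435256867456879504597131667211296,
    [18692364079364917481128194477221837675264, 18739054505714466542709106261046020080768,
     36131503320754304864021004709710594183936],
    [60813019, 780818219, 2780812819, 3501496715, 2626620413219, 10496060391619, 13122620621315,
     167813180397019, 335708220432119, 503521340626715, 84541500426719, 265479900607615,
     422879660664315, 598559500256615, 43253820410519, 221566381466215, 392085260243115,
     549404380621115, 127795260607815, 298235660262015, 474002140626515],
    [221027940659342, 320664356, 20480664356, 81920664356, 327680664356]⟩,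
  ⟨6938700153515365452989792521762175484960,
    [29589394830382281967080681725461104988416, 15581607103446014604724456637527272588352],
    [61569616, 781423816, 2781496716, 2626560955916, 338334720810116, 87168001101716,
     10496001028816, 178309120664316, 53749761174616, 5263360883016, 676433920737216,
     26562561247516],
    [2660659357, 320664343, 824320659357, 1361920659357, 430080659357]⟩,
  ⟨6852215998220432307980181536889954665504,
    [18313452316800698564990486963649840743552, 36397695515883403655161074862013299071232,
     35445548977691330293602271217481786637024],
    [60664320, 3500810118, 2626620413219, 335708220432119, 84541500426719, 10496000413219,
     178309120426719, 53749760432119],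
    [422054500179263, 826980659351, 320179263, 1361920659351, 20480179263, 81920179263,
     327680179263]⟩,
  ⟨6938702749663872091656062123277521290272,
    [29589392236769347328254458974372618082560, 18094138781486575971804176549842117592128],
    [61115419, 780664319, 2780823619, 2626560664319, 338334721115419, 87168000823619,
     10496000737218, 5263360823619, 676433921115419, 26562560664319],
    [2660805161, 321247553, 824320805161, 167782401247553, 51200805161, 430080805161, 1310720805161]⟩,
  ⟨1667063782035037371476927602340147528736,
    [18306815260805972811530360991366254888000, 25426291930546564050129355143507517443264,
     8837670170309335799923919641129460868672],
    [60664320, 780745319, 2626620340319, 671170620326819, 1600745319, 5263360340319,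
     335708160326819],
    [673710740187762, 671093860119352, 2703460119362, 87700117262, 160119362, 41943360187762,
     1311040117262, 10240117262, 83906560119362, 675840187762, 40960187762, 21135360119362,
     491520117262]⟩,
  ⟨7066472194610195330517724296100556342304,
    [29677326380208207316905903908486866049280, 18306815260805972811530360991366254888000],
    [60664320, 10496000664320, 5263360664320],
    [2660664364, 320664364, 5120664364, 1361920664364, 430080664364, 163840664364, 655360664364]⟩,
  ⟨9875179020323180523219070468530607522848,
    [18306815260805972811530360991366254888000, 36395330343605458494088554679501466933344],
    [60664320, 10496000664320, 5263360664320, 335708160664320],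
    [660661965, 100732266, 160732266, 320661965, 5120732266, 167782400661965, 51200732266,
     20992000661965, 348160732266, 81920732266, 84049920661965, 819200732266, 1310720732266]⟩,
  ⟨12686667781337367671305029716539916485664,
    [18306815260805972811530360991366254888000],
    [],
    [20664367, 80664367, 160664367, 320664367, 5120664367, 10240664367, 20480664367, 40960664367,
     81920664367, 163840664367, 327680664367, 655360664367, 1310720664367]⟩,
  ⟨2767496905454563113475513869235649546272,
    [27743125168920974554543117683704013576736, 28055756774434094789425960620640621955104,
     33399705845059674994199551473285280289088],
    [],
    []⟩,
  ⟨1405039466015568705404943538261314274336,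
    [34956815038898626028333067054579633423616, 22900591900594997202937560855187226244832],
    [],
    []⟩,
  ⟨4215110609601262323545050446398055547936,
    [35039267297501844569948843751215196210240, 28227105122469536593866195088556621370624],
    [],
    []⟩,
  ⟨5620147479468363075909952051276540838944,
    [30951889835376761447915662379414495265856, 35084585782367252204174514217341322074208],
    [],
    []⟩,
  ⟨5620147479468363075909952050177028162592,
    [34999431911266209767812545447183672973568, 35077853978366194299690002726942042883136],
    [],
    [2660753831, 320664336]⟩,
  ⟨5488425394731662255238538703972194092064,
    [29113479268424267259263116926689771021952, 29465935279306772104798647495780117578944,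
     29564118988866016097664344616526410090784],
    [],
    [221027940659331, 321045032]⟩,
  ⟨2766166459284926384980347989980066382880,
    [15591442862774758901627118538304772605728, 18702423091548101849419480798973499845248],
    [],
    [221027940103136, 671109440664332]⟩,
  ⟨5576282830066763345983721511235315860512,
    [32352642624710986151629156810643148706048, 30787360298919413070376682283593497843808,
     22851498722332837914291237198414210999872, 36444388535846057797580486022113069761600],
    [],
    []⟩,
  ⟨4172535032831136701275368955799206396960,
    [15545842364769999703625609272703889708256, 33585342363133151580600599613582517278816,
     25335987427603123383370853051832507499584, 33765951369020044123834718249589356463168],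
    [],
    []⟩,
  ⟨5492416976744728799360666254065664033824,
    [30958495808500773459570132241995390846144, 30047463185051436717292210686190811693856,
     23837641970676126116466726225570821085440],
    [],
    []⟩,
  ⟨2810202372084490351028875156739384738848,
    [14092088037161892348711686985096843035712, 33807158694437071958968374586452321929248],
    [],
    [20753637]⟩,
  ⟨2766166499889359711356646357810281481248,
    [15386752125864024386597166246256166634688, 36341431785618070027584065352145554716992],
    [],
    [221027940664337]⟩,
  ⟨5620148777542576461693432484929645610016,
    [35080516156495715957344441897342060370144, 28151209245647302062977024491143744783552],
    [],
    []⟩,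
  ⟨7025184349335463828274853655055513453600,
    [30869475184542593341450595055872881394752, 35084585782367332184613742696093834087616],
    [],
    [660826644, 100753844, 160753844, 320826644]⟩,
  ⟨6853546485032915979590499080385611203616,
    [29592048096612294540086826199166333524224, 26005072105731046615810194560365755972384,
     18094129541739807149700059977217951859840],
    [],
    [422054500179247, 826980109147, 1361920109147, 430080179247]⟩,
  ⟨7025184349335463828274853653955967222816,
    [29592048096612373200507247619679653528768, 35084585782367327162303453458780748026112],
    [],
    [2660902737]⟩,
  ⟨4169872842418809103807096349878304933920,
    [15717558568760133860366698371225176709760, 7813719648733804321010084103012248242816],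
    [],
    []⟩,
  ⟨6849554943584668642734782861242205766688,
    [26828672734018833578310506190649645146240, 36007844871779153533203205706583993213728,
     26718405203426021529664158871744730695040],
    [],
    [221027940659344]⟩,
  ⟨8386313857623611074955032114270892491808,
    [29465934995630336289621407476474920902784, 36356745079972008844539598390836986971328],
    [],
    [320664347]⟩,
  ⟨4300226674573214973988716901779367822368,
    [16984150169993230616036142972926480649408, 25335987427603123383370853051832507499584,
     33765951369020044123834718249589356463168],
    [],
    [178344961101748]⟩,
  ⟨7021238120013512969716103145618097079328,
    [35166743155416337864244094696628587627584, 30504097832858052947343882923936048040224,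
     19794524035739281486078220633305741069504, 23749998514802270526698218833272171960416],
    [],
    [5780175958, 31457600175958, 336936960175958, 655360175958]⟩,
  ⟨2810203629593964357610716392365320373280,
    [15410427460649736305742516062240066241600, 35084628537686816501329179937019639531552],
    [],
    [20667259, 327680667259, 655360667259, 1310720667259]⟩,
  ⟨8343737023382466205354694125541114545184,
    [29589394830382281967080681725527609874688, 20816388558078421999491961043979271734464],
    [],
    [2660664360, 824320664360, 1361920664360, 430080664360]⟩,
  ⟨2810246547172645789993286181986276279328,
    [15410641968603161616237773167019612177472, 35084545542066717187546917393195364156480],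
    [],
    []⟩,
  ⟨9791350727490711827319933719149377782816,
    [29592048096612294464455319617572008138848, 26831328796488077074476921254647456531520],
    [],
    [660902254, 320902254]⟩,
  ⟨9575805460965242970195594001796001989664,
    [20616435811067989893115356812145768850944, 21028774268782481680649175584236882698432,
     21120701279632271549535244048532306527296],
    [],
    [826980222554, 1361920222554]⟩,
  ⟨9791350727490711827319933718049831552032,
    [29550922510610756976992741553801373222080, 36274330429137794805137276476252831812736],
    [],
    []⟩,
  ⟨6941481930325733483746105127504030237728,
    [22221339672609093935808713108446994533568, 29551098025427662456413551385451839030336],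
    [],
    []⟩,
  ⟨8472800690195411475206518342031366980640,
    [25335987427603123383370853051832507499584, 28236279911018870963617310209426467097792,
     33585342363133151580600599613582517278816],
    [],
    []⟩,
  ⟨9791350768055491138852552062896473932832,
    [26913734248100646495245553518921393447104, 36271591492547391299187450856481904198784],
    [],
    []⟩,
  ⟨11240210455875842876747554169241848579104,
    [35166743156605998243105302707765691843648, 35084628537686816501329179937019639531552],
    [],
    []⟩,
  ⟨9706277542070754102773913957873664164896,
    [18141814456315805440894923218839444428896, 29551098025427662456413551385451839030336],
    [],
    []⟩,
  ⟨8514002821967545112194519481837832668192,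
    [15676183490105967968739593780883182781568, 29677326380208207316905903908486866049280],
    [],
    []⟩,
  ⟨4171503308607269939355489878579808896032,
    [15369478654825200896230692070073618433088, 36444388535846057797580486022113069761600],
    [],
    []⟩,
  ⟨12601467221235855093690835656772808639520,
    [32353028541388793024775810318299868205312, 36444388535846057797580486022113069761600,
     30787360298919413070376682283593497843808],
    [],
    [2660664358]⟩,
  ⟨12294072895528550710901409344573586572320,
    [36007847465392284015651017164358859612736, 36441723598356962951907467484859905148096,
     36265028435653709604654999252917603732608],
    [],
    [221027940664359]⟩,
  ⟨12645288949172879606735868803436131714080,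
    [33765991610548695638693166095567386937376, 36444347038035970078451209577518620345408],
    [],
    [20667260]⟩,
  ⟨14006504091102955846055737260552856045600,
    [30787360298919413070376682283593497843808, 32353028541388793024775810318299868205312],
    [],
    []⟩,
  ⟨13697779238058000103351859336641610024992,
    [35918826841434095626383575566280976656128, 36397695515883403655161074862013299071232],
    [],
    []⟩,
  ⟨12604085521900212421559406337405631891488,
    [29592048096612294464455319612145247754496],
    [],
    []⟩,
  ⟨15455321108658849822543574904684045992992,
    [35084545542066717187546917393195364156480],
    [],
    []⟩,
  ⟨13966666274585368603074659399888254567456,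
    [29551098025427662456413551385451839030336, 36271665491648435358115125225201189588160],
    [],
    []⟩,
  ⟨15323683443157160455555523115008056656928,
    [36356569929881866167698496803664053739712, 36444388535846057797580486022113069761600],
    [],
    []⟩,
  ⟨15584425060219412966029726169250184333344,
    [29677326380208207316905903908486866049280],
    [],
    []⟩,
  ⟨16905590670030687186224017021183285330976,
    [21120701279632271549535244048532306527296],
    [],
    []⟩,
  ⟨23841676462784048450769477171973302846496,
    [36444388535846057797580486022113069761600],
    [],
    []⟩,
  ⟨36485634846548906633991799739614356408352,
    [],
    [],
    []⟩]


/-- The entry with number `i`. -/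
def entry (i : ℕ) : Entry :=
  List.rec (fun _ => ⟨0, [], [], []⟩) (fun a _ ih j => Nat.rec a (fun k _ => ih k) j) table i

/-- The packed colouring of entry `i`. -/
def color (i : ℕ) : ℕ := Entry.rec (fun c _ _ _ => c) (entry i)

/-- Whether a packed and salted function is constant on a list of points. -/
def constOn (V : ℕ) (l : List ℕ) : Bool :=
  List.rec true (fun y ys _ => force (dig V y) fun d => allR ys fun z => Nat.beq (dig V z) d) l

/-- One coordinate of a linear map with coefficients `a b c`. -/
def linC (a b c x : ℕ) : ℕ :=
  Nat.mod (Nat.add (Nat.add (Nat.mul a (Nat.mod x 3)) (Nat.mul b (Nat.mod (Nat.div x 3) 3)))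
    (Nat.mul c (Nat.div x 9))) 3

/-- The linear map with matrix entries the ternary digits of `g`, on codes. -/
def lin (g x : ℕ) : ℕ :=
  Nat.add (linC g (Nat.div g 27) (Nat.div g 729) x)
    (Nat.add (Nat.mul 3 (linC (Nat.div g 3) (Nat.div g 81) (Nat.div g 2187) x))
      (Nat.mul 9 (linC (Nat.div g 9) (Nat.div g 243) (Nat.div g 6561) x)))

/-- `f a b` for all pairs of corresponding members of two lists. -/
def zipAll (f : ℕ → ℕ → Bool) (l : List ℕ) : List ℕ → Bool :=
  List.rec (fun _ => true)
    (fun a _ ih m => List.rec true (fun b bs _ => Bool.rec false (ih bs) (f a b)) m) l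

/-- `as i = as j` implies `bs i = bs j`, for `i < j`. -/
def factors (as : List ℕ) : List ℕ → Bool :=
  List.rec (fun _ => true)
    (fun a as ih m => List.rec true (fun b bs _ =>
      andR (zipAll (fun a' b' => impR (Nat.beq a a') (Nat.beq b b')) as bs) (ih bs)) m) as

/-- `f a b c` for all triples of corresponding members of three lists. -/
def zipAll3 (f : ℕ → ℕ → ℕ → Bool) (l : List ℕ) : List ℕ → List ℕ → Bool :=
  List.rec (fun _ _ => true)
    (fun a _ ih m n => List.rec true (fun b bs _ => List.rec true (fun c cs _ =>
      Bool.rec false (ih bs cs) (f a b c)) n) m) l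

/-- `as i = as j` implies `bs i = bs j` or `bs i = cs j`, for `i < j`. -/
def factors3 (as : List ℕ) : List ℕ → List ℕ → Bool :=
  List.rec (fun _ _ => true)
    (fun a as ih m n => List.rec true (fun b bs _ => List.rec true (fun _ cs _ =>
      andR (zipAll3 (fun a' b' c' =>
        impR (Nat.beq a a') (orR (Nat.beq b b') (Nat.beq b c'))) as bs cs) (ih bs cs)) n) m) as

/-- The colour of `x` after refining the colouring by two packed functions. -/
def value (U V x : ℕ) : ℕ := Nat.add (Nat.mul (dig V x) 2048) (dig U x)

/-- The map `g` is injective, and the colouring `d` factors through `value U V ∘ g`. -/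
def hintOK (g d U V : ℕ) : Bool :=
  tab (lin g) codes fun gs => tab (value U V) gs fun fs => tab (look d) codes fun ts =>
    andR (allR codes fun x => orR (Nat.beq x 0) (notR (Nat.beq (lin g x) 0))) (factors fs ts)

/-- Points of the same colour for `d` have up to sign the same colour for `c ∘ g`. -/
def symOK (c g d : ℕ) : Bool :=
  tab (lin g) codes fun gs => tab (look c) gs fun cs => tab (fun y => look c (negC y)) gs fun ns =>
    tab (look d) codes fun ts => factors3 ts cs ns

/-- Points of the same colour have up to sign the same value. -/
def symConst (c U V : ℕ) : Bool :=
  tab (value U V) codes fun fs => tab (fun y => value U V (negC y)) codes fun ns =>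
    tab (look c) codes fun cs => factors3 cs fs ns

/-- The packed and salted function `c ^ 2 + 1000 * 1_Y`, where `b` is the packed function `c ^ 2`
and `ys` lists `Y`. -/
def refined (b : ℕ) (ys : List ℕ) : ℕ :=
  salted (List.rec b (fun y _ s => Nat.add s (Nat.mul 1000 (mono y))) ys)
    (List.rec 0 (fun y _ s => Nat.add s (Nat.pow 2 y)) ys)

/-- The convolution square of `U`. -/
def square1 (U : ℕ) : ℕ := salted (sq (Nat.div U radix)) U

/-- The convolution square of the pointwise product of `U` and `V` modulo `61`. -/
def square2 (U V : ℕ) : ℕ :=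
  salted (sq (pack fun x => Nat.mul (dig U x) (Nat.mod (dig V x) 61))) U

/-- Unless `square1` or `square2` is not constant on `ys`, evaluate `k` on `U` and `square2`. -/
def refute (b : ℕ) (ys : List ℕ) (k : ℕ → ℕ → Bool) : Bool :=
  force (refined b ys) fun U => force (square1 U) fun V =>
    impR (constOn V ys) (force (square2 U V) fun W => impR (constOn W ys) (k U W))

/-- The first hint with key `k`, or `0`. -/
def findHint (hs : List ℕ) (k : ℕ) : ℕ :=
  List.rec 0 (fun h _ ih => Bool.rec ih h (Nat.beq (Nat.div h 10000000) k)) hs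

/-- The case that `ys` is a class of the symmetrized relation, contained in the colour class with
representatives `pts`: the case is impossible, or `ys` is the whole colour class,
or a hint leads to a later entry. -/
def leaf1 (i b : ℕ) (hs pts ys : List ℕ) : Bool :=
  orR (allR pts fun p => anyR ys fun y => Nat.beq p y) (refute b ys fun U W =>
    force (findHint hs (Nat.mod U radix)) fun h => force (Nat.mod h 100) fun j =>
      andR (Nat.ble (Nat.succ i) j) (andR (Nat.ble j 20)
        (hintOK (Nat.mod (Nat.div h 100) 100000) (color j) U W)))

/-- The case that `ys` is a class of the relation with `ys ∪ -ys` a colour class: the case is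
impossible, or a hint leads to a later entry. -/
def leaf2 (i c b : ℕ) (hs ys : List ℕ) : Bool :=
  refute b ys fun U W => force (findHint hs (Nat.mod U radix)) fun h =>
    Bool.rec
      (force (Nat.mod h 100) fun j => force (Nat.mod (Nat.div h 100) 100000) fun g =>
        andR (Nat.ble (Nat.succ i) j) (andR (Nat.ble j 67)
          (andR (hintOK g (color j) U W) (symOK c g (color j)))))
      (notR (symConst c U W)) (Nat.beq h 0)

/-- All extensions of `ys` by symmetric subsets of `l ∪ -l`. -/
def enum1 (leaf : List ℕ → Bool) (l : List ℕ) : List ℕ → Bool :=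
  List.rec (fun ys => leaf ys) (fun p _ ih ys =>
    andR (ih ys) (force (negC p) fun q => ih (q :: p :: ys))) l

/-- All extensions of `ys` by a choice of signs for the points of `l`. -/
def enum2 (leaf : List ℕ → Bool) (l : List ℕ) : List ℕ → Bool :=
  List.rec (fun ys => leaf ys) (fun p _ ih ys =>
    andR (ih (p :: ys)) (force (negC p) fun q => ih (q :: ys))) l

/-- The packed function `c ^ 2`. -/
def base (c : ℕ) : ℕ := pack fun x => Nat.mul (look c x) (look c x)

/-- All symmetric subsets of colour classes. -/
def check1 (i : ℕ) : Bool :=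
  Entry.rec (fun c _ hs _ => force (base c) fun b => allR codes fun k =>
    List.rec true (fun p ps _ => force (negC p) fun q =>
      enum1 (leaf1 i b hs (p :: ps)) ps [q, p])
    (filterR half fun p => Nat.beq (look c p) k)) (entry i)

/-- All choices of signs on symmetric colour classes. -/
def check2 (i : ℕ) : Bool :=
  Entry.rec (fun c _ _ hs => force (base c) fun b => allR codes fun k =>
    List.rec true (fun p ps _ => impR (Nat.beq (look c (negC p)) k)
      (enum2 (leaf2 i c b hs) ps [p]))
    (filterR half fun p => Nat.beq (look c p) k)) (entry i)

/-- The table `p` is an automorphism of the colouring `c` that fixes `0`. -/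
def autOK (c p : ℕ) : Bool :=
  andR (Nat.beq (look p 0) 0) (andR (allR codes fun x => Nat.ble (look p x) 26)
    (allR codes fun x => force (look p x) fun a => allR codes fun y =>
      Nat.beq (look c (subC a (look p y))) (look c (subC x y))))

/-- Colours are at most `26`, the colour class of `0` is `{0}`, and each point that is not the first
one of its colour is moved to an earlier one by an automorphism in the list. -/
def checkP (i : ℕ) : Bool :=
  Entry.rec (fun c perms _ _ =>
    andR (allR codes fun x => andR (Nat.ble (look c x) 26)
      (orR (Nat.beq x 0) (notR (Nat.beq (look c x) (look c 0)))))
      (andR (allR perms (autOK c))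
        (allR codes fun x => orR (anyR perms fun p => Nat.ble (Nat.succ (look p x)) x)
          (allR codes fun y => orR (Nat.ble x y) (notR (Nat.beq (look c y) (look c x))))))) (entry i)

/-! ### Evaluation of the checks -/

@[simp] lemma force_eq {α : Type} (n : ℕ) (k : ℕ → α) : force n k = k n := by
  cases n <;> rfl

@[simp] lemma allR_iff (l : List ℕ) (f : ℕ → Bool) : allR l f = true ↔ ∀ x ∈ l, f x = true := by
  induction l with
  | nil => simp [allR]
  | cons a l ih =>
    have h : allR (a :: l) f = Bool.rec false (allR l f) (f a) := rfl
    rw [h]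
    cases hf : f a <;> simp [hf, ih]

@[simp] lemma anyR_iff (l : List ℕ) (f : ℕ → Bool) : anyR l f = true ↔ ∃ x ∈ l, f x = true := by
  induction l with
  | nil => simp [anyR]
  | cons a l ih =>
    have h : anyR (a :: l) f = Bool.rec (anyR l f) true (f a) := rfl
    rw [h]
    cases hf : f a <;> simp [hf, ih]

lemma filterR_eq (l : List ℕ) (f : ℕ → Bool) : filterR l f = l.filter f := by
  induction l with
  | nil => rfl
  | cons a l ih =>
    have h : filterR (a :: l) f = Bool.rec (filterR l f) (a :: filterR l f) (f a) := rfl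
    rw [h, ih, List.filter_cons]
    cases f a <;> rfl

@[simp] lemma andR_iff (a b : Bool) : andR a b = true ↔ a = true ∧ b = true := by
  cases a <;> simp [andR]

@[simp] lemma orR_iff (a b : Bool) : orR a b = true ↔ a = true ∨ b = true := by
  cases a <;> simp [orR]

@[simp] lemma notR_iff (a : Bool) : notR a = true ↔ ¬ a = true := by
  cases a <;> simp [notR]

@[simp] lemma impR_iff (a b : Bool) : impR a b = true ↔ (a = true → b = true) := by
  cases a <;> simp [impR]

@[simp] lemma tab_eq (f : ℕ → ℕ) (l : List ℕ) (k : List ℕ → Bool) : tab f l k = k (l.map f) := by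
  induction l generalizing k with
  | nil => rfl
  | cons a l ih =>
    have h : tab f (a :: l) k = force (f a) fun b => tab f l fun l => k (b :: l) := rfl
    rw [h, force_eq, ih, List.map_cons]

lemma zipAll_map {α : Type} (f : ℕ → ℕ → Bool) (l : List α) (s t : α → ℕ) :
    zipAll f (l.map s) (l.map t) = true ↔ ∀ x ∈ l, f (s x) (t x) = true := by
  induction l with
  | nil => simp [zipAll]
  | cons a l ih =>
    have h : zipAll f ((a :: l).map s) ((a :: l).map t)
      = Bool.rec false (zipAll f (l.map s) (l.map t)) (f (s a) (t a)) := rfl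
    rw [h]
    cases hf : f (s a) (t a) <;> simp [hf, ih]

lemma zipAll3_map {α : Type} (f : ℕ → ℕ → ℕ → Bool) (l : List α) (s t u : α → ℕ) :
    zipAll3 f (l.map s) (l.map t) (l.map u) = true ↔ ∀ x ∈ l, f (s x) (t x) (u x) = true := by
  induction l with
  | nil => simp [zipAll3]
  | cons a l ih =>
    have h : zipAll3 f ((a :: l).map s) ((a :: l).map t) ((a :: l).map u)
      = Bool.rec false (zipAll3 f (l.map s) (l.map t) (l.map u)) (f (s a) (t a) (u a)) := rfl
    rw [h]
    cases hf : f (s a) (t a) (u a) <;> simp [hf, ih]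

lemma factors_iff {α : Type} (l : List α) (s t : α → ℕ) :
    factors (l.map s) (l.map t) = true ↔ l.Pairwise fun x y => s x = s y → t x = t y := by
  induction l with
  | nil => simp [factors]
  | cons a l ih =>
    have h : factors ((a :: l).map s) ((a :: l).map t)
      = andR (zipAll (fun a' b' => impR (Nat.beq (s a) a') (Nat.beq (t a) b')) (l.map s) (l.map t))
          (factors (l.map s) (l.map t)) := rfl
    rw [h, andR_iff, zipAll_map, ih, List.pairwise_cons]
    simp

lemma factors3_iff {α : Type} (l : List α) (s t u : α → ℕ) :
    factors3 (l.map s) (l.map t) (l.map u) = true ↔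
      l.Pairwise fun x y => s x = s y → t x = t y ∨ t x = u y := by
  induction l with
  | nil => simp [factors3]
  | cons a l ih =>
    have h : factors3 ((a :: l).map s) ((a :: l).map t) ((a :: l).map u)
      = andR (zipAll3 (fun a' b' c' => impR (Nat.beq (s a) a')
          (orR (Nat.beq (t a) b') (Nat.beq (t a) c'))) (l.map s) (l.map t) (l.map u))
          (factors3 (l.map s) (l.map t) (l.map u)) := rfl
    rw [h, andR_iff, zipAll3_map, ih, List.pairwise_cons]
    simp

lemma constOn_of_forall {V : ℕ} {l : List ℕ} (h : ∀ x ∈ l, ∀ y ∈ l, dig V x = dig V y) :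
    constOn V l = true := by
  cases l with
  | nil => rfl
  | cons a l =>
    have e : constOn V (a :: l) = force (dig V a) fun d => allR l fun z => Nat.beq (dig V z) d := rfl
    rw [e, force_eq, allR_iff]
    intro z hz
    simpa using h z (by simp [hz]) a (by simp)

/-! ### Points and codes -/

/-- The elementary abelian group of order `27`, written additively. -/
abbrev V := ZMod 3 × ZMod 3 × ZMod 3

/-- The code of a point. -/
def code (v : V) : ℕ := v.1.val + 3 * v.2.1.val + 9 * v.2.2.val

/-- The point with code `n`. -/
def pt (n : ℕ) : V := ((n : ZMod 3), ((n / 3 : ℕ) : ZMod 3), ((n / 9 : ℕ) : ZMod 3))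

lemma pt_code (v : V) : pt (code v) = v := by
  revert v; decide

lemma code_mem (v : V) : code v ∈ codes := by
  revert v; decide

lemma code_pt {n : ℕ} (h : n ∈ codes) : code (pt n) = n := by
  revert n; decide

lemma code_lt (v : V) : code v < 27 := by
  revert v; decide

lemma code_inj {v w : V} (h : code v = code w) : v = w := by
  rw [← pt_code v, h, pt_code]

lemma mem_codes {n : ℕ} (h : n ≤ 26) : n ∈ codes := by
  simp only [codes, List.mem_cons, List.not_mem_nil]; omega

lemma code_zero : code 0 = 0 := by decide

lemma subC_code (v w : V) : subC (code v) (code w) = code (v - w) := by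
  revert v w; decide +kernel

lemma negC_code (v : V) : negC (code v) = code (-v) := by
  revert v; decide +kernel

lemma half_or (v : V) (hv : v ≠ 0) : code v ∈ half ∨ code (-v) ∈ half := by
  revert v; decide +kernel

lemma half_codes {n : ℕ} (h : n ∈ half) : n ∈ codes := by
  revert n; decide +kernel

/-- Each nonzero point occurs exactly once as `± p` with `p` in `half`. -/
lemma half_sum (v : V) (hv : v ≠ 0) :
    (half.map fun p => [p, negC p].count (code v)).sum = 1 := by
  revert v; decide +kernel

lemma pos_code (v : V) : pos (code v) = v.1.val + 6 * v.2.1.val + 36 * v.2.2.val := by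
  revert v; decide +kernel

lemma sum_codes (f : ℕ → ℕ) : (codes.map f).sum = ∑ v : V, f (code v) := by
  have h : Finset.univ.image code = codes.toFinset := by decide +kernel
  have h2 : codes.Nodup := by decide +kernel
  rw [← List.sum_toFinset f h2, ← h, Finset.sum_image (fun a _ b _ h => code_inj h)]

/-! ### Packed functions and convolution -/

/-- The convolution of two functions on the group. -/
def conv (f g : V → ℕ) (z : V) : ℕ := ∑ x, f x * g (z - x)

/-- The number `N` has digits `d`, all at most `M`, and none at position `173` or above. -/
structure HasDigits (N : ℕ) (d : ℕ → ℕ) (M : ℕ) : Prop where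
  eq : N = ∑ i ∈ Finset.range 173, d i * radix ^ i
  zero : ∀ i, 173 ≤ i → d i = 0
  le : ∀ i, d i ≤ M

lemma sum_digits_lt (d : ℕ → ℕ) (hd : ∀ i, d i < radix) (k : ℕ) :
    ∑ i ∈ Finset.range k, d i * radix ^ i < radix ^ k := by
  induction k with
  | zero => simp
  | succ k ih =>
    rw [Finset.sum_range_succ, pow_succ]
    have h : (d k + 1) * radix ^ k ≤ radix * radix ^ k := Nat.mul_le_mul_right _ (hd k)
    nlinarith

lemma HasDigits.div {N M : ℕ} {d : ℕ → ℕ} (h : HasDigits N d M) (hM : M < radix) (k : ℕ) :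
    N / radix ^ k = ∑ i ∈ Finset.range 173, d (i + k) * radix ^ i := by
  have hpos : 0 < radix := by decide
  have e : N = ∑ i ∈ Finset.range (k + 173), d i * radix ^ i := by
    rw [h.eq]
    refine Finset.sum_subset (fun i hi => ?_) (fun i _ hi => ?_)
    · simp only [Finset.mem_range] at hi ⊢; omega
    · rw [h.zero i (by simpa using hi), zero_mul]
  have e2 : ∑ i ∈ Finset.range 173, d (k + i) * radix ^ (k + i)
      = radix ^ k * ∑ i ∈ Finset.range 173, d (i + k) * radix ^ i := by
    rw [Finset.mul_sum]
    refine Finset.sum_congr rfl fun i _ => ?_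
    rw [pow_add, add_comm k i]; ring
  rw [e, Finset.sum_range_add, e2, Nat.add_mul_div_left _ _ (pow_pos hpos k),
    Nat.div_eq_of_lt (sum_digits_lt d (fun i => (h.le i).trans_lt hM) k), zero_add]

lemma HasDigits.fold {N M : ℕ} {d : ℕ → ℕ} (h : HasDigits N d M) (hM : M < radix) (k : ℕ) :
    HasDigits (fold k N) (fun i => d i + d (i + k)) (2 * M) where
  eq := by
    have e : ElemThree.fold k N = N + N / radix ^ k := rfl
    rw [e, h.div hM]
    nth_rewrite 1 [h.eq]
    rw [← Finset.sum_add_distrib]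
    exact Finset.sum_congr rfl fun i _ => by ring
  zero i hi := by rw [h.zero i hi, h.zero (i + k) (by omega)]
  le i := by have := h.le i; have := h.le (i + k); omega

lemma HasDigits.digit {N M : ℕ} {d : ℕ → ℕ} (h : HasDigits N d M) (hM : M < radix) (k : ℕ) :
    N / radix ^ k % radix = d k := by
  rw [h.div hM, Finset.sum_range_succ']
  have e : ∑ i ∈ Finset.range 172, d (i + 1 + k) * radix ^ (i + 1)
      = radix * ∑ i ∈ Finset.range 172, d (i + 1 + k) * radix ^ i := by
    rw [Finset.mul_sum]
    exact Finset.sum_congr rfl fun i _ => by ring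
  rw [e, pow_zero, mul_one, zero_add, Nat.mul_add_mod, Nat.mod_eq_of_lt ((h.le k).trans_lt hM)]

/-- The digit position of a point. -/
def place (v : V) : ℕ := v.1.val + 6 * v.2.1.val + 36 * v.2.2.val

lemma place_le (v : V) : place v ≤ 86 := by
  have h1 := ZMod.val_lt v.1
  have h2 := ZMod.val_lt v.2.1
  have h3 := ZMod.val_lt v.2.2
  unfold place; omega

/-- The packed form of a function on the group. -/
def packV (f : V → ℕ) : ℕ := ∑ v, f v * radix ^ place v

lemma mono_code (v : V) : mono (code v) = radix ^ place v := by
  rw [place, ← pos_code]; rfl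

lemma pack_eq (f : ℕ → ℕ) : pack f = packV fun v => f (code v) := by
  have h : ∀ l : List ℕ, (List.rec 0 (fun x _ s => Nat.add (Nat.mul (f x) (mono x)) s) l : ℕ)
      = (l.map fun x => f x * mono x).sum := by
    intro l
    induction l with
    | nil => rfl
    | cons a l ih => rw [List.map_cons, List.sum_cons, ← ih]; rfl
  rw [packV, pack, h, sum_codes]
  simp only [mono_code]

lemma HasDigits.packV_mul {f : V → ℕ} {M : ℕ} (hf : ∀ v, f v ≤ M) :
    HasDigits (packV f * packV f)
      (fun i => ∑ v, ∑ w, if place v + place w = i then f v * f w else 0) (729 * (M * M)) where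
  eq := by
    rw [packV, Finset.sum_mul_sum]
    simp only [Finset.sum_mul]
    conv_rhs => rw [Finset.sum_comm]
    refine Finset.sum_congr rfl fun v _ => ?_
    conv_rhs => rw [Finset.sum_comm]
    refine Finset.sum_congr rfl fun w _ => ?_
    have hv := place_le v
    have hw := place_le w
    rw [Finset.sum_eq_single (place v + place w)]
    · rw [if_pos rfl, pow_add]; ring
    · intro i _ hi; rw [if_neg (Ne.symm hi), zero_mul]
    · intro hi; simp only [Finset.mem_range] at hi; omega
  zero i hi := by
    refine Finset.sum_eq_zero fun v _ => Finset.sum_eq_zero fun w _ => if_neg ?_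
    have hv := place_le v
    have hw := place_le w
    omega
  le i := by
    calc _ ≤ ∑ v : V, ∑ w : V, M * M := by
          refine Finset.sum_le_sum fun v _ => Finset.sum_le_sum fun w _ => ?_
          split_ifs
          · exact Nat.mul_le_mul (hf v) (hf w)
          · exact Nat.zero_le _
      _ = 729 * (M * M) := by simp [ZMod.card]; ring

lemma carry_coord (a b c : ZMod 3) :
    (a.val + b.val = c.val ∨ a.val + b.val = c.val + 3) ↔ a + b = c := by
  revert a b c; decide

/-- The eight shifts of `place z` that `sq` collects are hit by `place x + place y` exactly
once if `x + y = z`, and never otherwise. -/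
lemma carry (x y z : V) (t : ℕ) :
    ((((if place x + place y = place z then t else 0)
      + (if place x + place y = place z + 3 then t else 0))
      + ((if place x + place y = place z + 18 then t else 0)
      + (if place x + place y = place z + 18 + 3 then t else 0)))
      + (((if place x + place y = place z + 108 then t else 0)
      + (if place x + place y = place z + 108 + 3 then t else 0))
      + ((if place x + place y = place z + 108 + 18 then t else 0)
      + (if place x + place y = place z + 108 + 18 + 3 then t else 0))))
      = if y = z - x then t else 0 := by
  have h : y = z - x ↔ x.1 + y.1 = z.1 ∧ x.2.1 + y.2.1 = z.2.1 ∧ x.2.2 + y.2.2 = z.2.2 := by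
    rw [eq_sub_iff_add_eq', Prod.ext_iff, Prod.ext_iff]; rfl
  simp only [h, ← carry_coord]
  have x1 := ZMod.val_lt x.1
  have x2 := ZMod.val_lt x.2.1
  have x3 := ZMod.val_lt x.2.2
  have y1 := ZMod.val_lt y.1
  have y2 := ZMod.val_lt y.2.1
  have y3 := ZMod.val_lt y.2.2
  have z1 := ZMod.val_lt z.1
  have z2 := ZMod.val_lt z.2.1
  have z3 := ZMod.val_lt z.2.2
  have key : ∀ e1 e2 e3 : ℕ, e1 ≤ 3 → e2 ≤ 3 → e3 ≤ 3 →
      (place x + place y = place z + 36 * e3 + 6 * e2 + e1 ↔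
        x.1.val + y.1.val = z.1.val + e1 ∧ x.2.1.val + y.2.1.val = z.2.1.val + e2 ∧
          x.2.2.val + y.2.2.val = z.2.2.val + e3) := by
    intro e1 e2 e3 h1 h2 h3
    unfold place
    omega
  have k0 := key 0 0 0 (by omega) (by omega) (by omega)
  have k1 := key 3 0 0 (by omega) (by omega) (by omega)
  have k2 := key 0 3 0 (by omega) (by omega) (by omega)
  have k3 := key 3 3 0 (by omega) (by omega) (by omega)
  have k4 := key 0 0 3 (by omega) (by omega) (by omega)
  have k5 := key 3 0 3 (by omega) (by omega) (by omega)
  have k6 := key 0 3 3 (by omega) (by omega) (by omega)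
  have k7 := key 3 3 3 (by omega) (by omega) (by omega)
  simp only [Nat.reduceMul, add_zero] at k0 k1 k2 k3 k4 k5 k6 k7
  simp only [k0, k1, k2, k3, k4, k5, k6, k7]
  have n : ∀ a c : ℕ, (a = c ∧ a ≠ c + 3) ∨ (a ≠ c ∧ a = c + 3) ∨ (a ≠ c ∧ a ≠ c + 3) := by
    intro a c; omega
  obtain ⟨p1, q1⟩ | ⟨p1, q1⟩ | ⟨p1, q1⟩ := n (x.1.val + y.1.val) z.1.val <;>
  obtain ⟨p2, q2⟩ | ⟨p2, q2⟩ | ⟨p2, q2⟩ := n (x.2.1.val + y.2.1.val) z.2.1.val <;>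
  obtain ⟨p3, q3⟩ | ⟨p3, q3⟩ | ⟨p3, q3⟩ := n (x.2.2.val + y.2.2.val) z.2.2.val <;>
  simp only [p1, p2, p3, q1, q2, q3] <;> simp

lemma sq_digit {f : V → ℕ} {M : ℕ} (hf : ∀ v, f v ≤ M) (hM : 8 * (729 * (M * M)) < radix) (z : V) :
    sq (packV f) / radix ^ place z % radix = conv f f z := by
  have h0 := HasDigits.packV_mul hf
  have h1 := h0.fold (by omega) 3
  have h2 := h1.fold (by omega) 18
  have h3 := h2.fold (by omega) 108
  have e : sq (packV f) = fold 108 (fold 18 (fold 3 (packV f * packV f))) := rfl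
  rw [e, h3.digit (by omega), conv]
  simp only [← Finset.sum_add_distrib]
  refine Finset.sum_congr rfl fun x _ => ?_
  simp only [carry]
  simp

lemma radix_pos : 0 < radix := by decide

lemma salted_div (n s : ℕ) : salted n s / radix = n := by
  have h : salted n s = n * radix + s % radix := rfl
  rw [h, mul_comm, Nat.mul_add_div radix_pos, Nat.div_eq_of_lt (Nat.mod_lt _ radix_pos), add_zero]

lemma dig_salted (n s : ℕ) (v : V) :
    dig (salted n s) (code v) = n / radix ^ place v % radix := by
  have h : dig (salted n s) (code v)
      = salted n s / radix ^ (pos (code v) + 1) % radix := rfl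
  rw [h, pow_succ', ← Nat.div_div_eq_div_mul, salted_div, pos_code, place]

lemma place_inj {v w : V} (h : place v = place w) : v = w := by
  have := carry v 0 w 1
  have h0 : place 0 = 0 := rfl
  rw [h0, add_zero, if_pos h] at this
  by_contra hne
  have hn : ¬ (0 : V) = w - v := fun e => hne (sub_eq_zero.1 e.symm).symm
  rw [if_neg hn] at this
  omega

lemma packV_digit {f : V → ℕ} {M : ℕ} (hf : ∀ v, f v ≤ M) (hM : 27 * M < radix) (z : V) :
    packV f / radix ^ place z % radix = f z := by
  have h : HasDigits (packV f) (fun i => ∑ v, if place v = i then f v else 0) (27 * M) := by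
    refine ⟨?_, fun i hi => Finset.sum_eq_zero fun v _ => if_neg ?_, fun i => ?_⟩
    · rw [packV]
      simp only [Finset.sum_mul]
      conv_rhs => rw [Finset.sum_comm]
      refine Finset.sum_congr rfl fun v _ => ?_
      have hv := place_le v
      rw [Finset.sum_eq_single (place v)]
      · rw [if_pos rfl]
      · intro i _ hi; rw [if_neg (Ne.symm hi), zero_mul]
      · intro hi; simp only [Finset.mem_range] at hi; omega
    · have hv := place_le v
      omega
    · calc _ ≤ ∑ v : V, M := by
            refine Finset.sum_le_sum fun v _ => ?_
            split_ifs
            · exact hf v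
            · exact Nat.zero_le _
        _ = 27 * M := by simp [ZMod.card]
  rw [h.digit hM, Finset.sum_eq_single z]
  · rw [if_pos rfl]
  · intro v _ hv; exact if_neg fun e => hv (place_inj e)
  · intro hz; exact absurd (Finset.mem_univ z) hz

lemma look_lt (T n : ℕ) : look T n < 32 := Nat.mod_lt _ (by decide)

/-- The function that `refined` packs. -/
def weight (c : ℕ) (ys : List ℕ) (v : V) : ℕ :=
  look c (code v) * look c (code v) + 1000 * ys.count (code v)

lemma refined_div (c : ℕ) (ys : List ℕ) (hys : ∀ y ∈ ys, y ∈ codes) :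
    refined (base c) ys / radix = packV (weight c ys) := by
  rw [refined, salted_div]
  induction ys with
  | nil =>
    have h : base c = pack fun x => look c x * look c x := rfl
    change base c = _
    rw [h, pack_eq]
    rfl
  | cons y ys ih =>
    have h := ih fun z hz => hys z (List.mem_cons_of_mem _ hz)
    change (List.rec (base c) (fun y _ s => Nat.add s (Nat.mul 1000 (mono y))) ys : ℕ)
      + 1000 * mono y = _
    rw [h, ← code_pt (hys y List.mem_cons_self), mono_code, packV, packV,
      ← Finset.add_sum_erase _ _ (Finset.mem_univ (pt y)),
      ← Finset.add_sum_erase Finset.univ _ (Finset.mem_univ (pt y))]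
    have e : ∀ v ∈ Finset.univ.erase (pt y), weight c (code (pt y) :: ys) v * radix ^ place v
        = weight c ys v * radix ^ place v := by
      intro v hv
      rw [weight, weight, List.count_cons_of_ne]
      exact fun e => Finset.ne_of_mem_erase hv (code_inj e.symm)
    rw [Finset.sum_congr rfl e, weight, weight, List.count_cons_self]
    ring

/-! ### Schur relations -/

/-- The function `f` is constant on the classes of `r`. -/
def Meas (r : V → V → Prop) (f : V → ℕ) : Prop := ∀ x y, r x y → f x = f y

/-- The relation of lying in the same basic set of an S-ring over `V`. -/
structure SRel (r : V → V → Prop) : Prop where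
  equiv : Equivalence r
  zero : ∀ x, r 0 x → x = 0
  neg : ∀ x y, r x y → r (-x) (-y)
  conv : ∀ f g, Meas r f → Meas r g → Meas r (conv f g)

/-- The classes of `r` are orbits of the stabilizer of `0` in the automorphism group of `r`. -/
def SchurRel (r : V → V → Prop) : Prop :=
  ∀ x y, r x y → ∃ f : Equiv.Perm V, f 0 = 0 ∧ f x = y ∧ ∀ a b, r (f a - f b) (a - b)

/-- The symmetrization of `r`: its classes are the sets `X ∪ -X` for the classes `X` of `r`. -/
def sym (r : V → V → Prop) (x y : V) : Prop := r x y ∨ r x (-y)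

/-- The colouring of the group given by a packed table. -/
def col (c : ℕ) (v : V) : ℕ := look c (code v)

lemma Meas.of_comp {r : V → V → Prop} {f g : V → ℕ} (hf : Meas r f)
    (h : ∀ x y, f x = f y → g x = g y) : Meas r g :=
  fun x y hxy => h x y (hf x y hxy)

lemma Meas.map₂ {r : V → V → Prop} {f g : V → ℕ} (hf : Meas r f) (hg : Meas r g) (F : ℕ → ℕ → ℕ) :
    Meas r fun v => F (f v) (g v) :=
  fun x y hxy => congrArg₂ F (hf x y hxy) (hg x y hxy)

/-- If the point set `S`, listed by `ys`, is a class of `r`, then the functions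
evaluated by `refute` are constant on the classes of `r`. -/
lemma refute_sound {r : V → V → Prop} (hr : SRel r) {c : ℕ} (hc : Meas r (col c))
    {ys : List ℕ} (hys : ∀ y ∈ ys, y ∈ codes) {S : V → Prop} [DecidablePred S]
    (hS : ∀ v, ys.count (code v) = if S v then 1 else 0)
    (hS1 : ∀ x y, r x y → (S x ↔ S y)) (hS2 : ∀ x y, S x → S y → r x y)
    {k : ℕ → ℕ → Bool} (h : refute (base c) ys k = true) :
    ∃ U W, Meas r (fun v => value U W (code v)) ∧ k U W = true := by
  have hu : Meas r (weight c ys) := by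
    intro x y hxy
    have h1 : look c (code x) = look c (code y) := hc x y hxy
    simp only [weight, hS, hS1 x y hxy, h1]
  have hu1 : ∀ v, weight c ys v ≤ 1961 := by
    intro v
    have h1 := look_lt c (code v)
    have h2 : look c (code v) * look c (code v) ≤ 31 * 31 :=
      Nat.mul_le_mul (by omega) (by omega)
    have h3 : ys.count (code v) ≤ 1 := by rw [hS]; split_ifs <;> omega
    unfold weight; omega
  simp only [refute, force_eq, impR_iff] at h
  set U := refined (base c) ys with hU
  have hUd : U / radix = packV (weight c ys) := refined_div c ys hys
  have dU : ∀ v, dig U (code v) = weight c ys v := by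
    intro v
    have e : dig U (code v) = U / radix ^ (pos (code v) + 1) % radix := rfl
    rw [e, pow_succ', ← Nat.div_div_eq_div_mul, hUd, pos_code]
    exact packV_digit hu1 (by decide) v
  set Q := square1 U with hQ
  have dQ : ∀ v, dig Q (code v) = conv (weight c ys) (weight c ys) v := by
    intro v
    have e : Q = salted (sq (U / radix)) U := rfl
    rw [e, dig_salted, hUd, sq_digit hu1 (by decide)]
  have mQ : Meas r fun v => dig Q (code v) := by
    simp only [dQ]; exact hr.conv _ _ hu hu
  have const : ∀ N, (Meas r fun v => dig N (code v)) → constOn N ys = true := by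
    intro N hN
    have hmem : ∀ y ∈ ys, S (pt y) := by
      intro y hy
      by_contra hn
      have h1 := hS (pt y)
      rw [if_neg hn, code_pt (hys y hy)] at h1
      exact (List.count_pos_iff.2 hy).ne' h1
    refine constOn_of_forall fun x hx y hy => ?_
    have := hN _ _ (hS2 _ _ (hmem x hx) (hmem y hy))
    simpa only [code_pt (hys x hx), code_pt (hys y hy)] using this
  have h := h (const Q mQ)
  set W := square2 U Q with hW
  let w : V → ℕ := fun v => dig U (code v) * (dig Q (code v) % 61)
  have mU : Meas r fun v => dig U (code v) := by simp only [dU]; exact hu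
  have dW : ∀ v, dig W (code v) = conv w w v := by
    intro v
    have e : W = salted (sq (pack fun x => dig U x * (dig Q x % 61))) U := rfl
    rw [e, dig_salted, pack_eq, sq_digit (M := 1961 * 60) _ (by decide)]
    intro v
    exact Nat.mul_le_mul (dU v ▸ hu1 v) (Nat.lt_succ_iff.1 (Nat.mod_lt _ (by decide)))
  have mW : Meas r fun v => dig W (code v) := by
    have hw : Meas r w := mU.map₂ mQ fun a b => a * (b % 61)
    simp only [dW]; exact hr.conv _ _ hw hw
  exact ⟨U, W, mU.map₂ mW fun a b => b * 2048 + a, h (const W mW)⟩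

lemma SRel.sym {r : V → V → Prop} (hr : SRel r) : SRel (sym r) := by
  have hs : ∀ {x y}, r x y → r y x := hr.equiv.symm
  have ht : ∀ {x y z}, r x y → r y z → r x z := hr.equiv.trans
  have hn : ∀ {x y}, r x y → r (-x) (-y) := fun h => hr.neg _ _ h
  have hn' : ∀ {x y}, r (-x) y → r x (-y) := fun h => by simpa using hn h
  have meas : ∀ f, Meas (ElemThree.sym r) f ↔ Meas r f ∧ ∀ x, f (-x) = f x := by
    intro f
    refine ⟨fun h => ⟨fun x y hxy => h x y (Or.inl hxy), fun x => h _ _ (Or.inr (hr.equiv.refl _))⟩,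
      ?_⟩
    rintro ⟨h1, h2⟩ x y (h | h)
    · exact h1 _ _ h
    · rw [h1 _ _ h, h2]
  refine ⟨⟨fun x => Or.inl (hr.equiv.refl x), ?_, ?_⟩, ?_, ?_, ?_⟩
  · rintro x y (h | h)
    · exact Or.inl (hs h)
    · exact Or.inr (hn' (hs h))
  · rintro x y z (h | h) (h' | h')
    · exact Or.inl (ht h h')
    · exact Or.inr (ht h h')
    · exact Or.inr (ht h (hn h'))
    · refine Or.inl (ht h ?_)
      simpa using hn h'
  · rintro x (h | h)
    · exact hr.zero x h
    · exact neg_eq_zero.1 (hr.zero _ h)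
  · rintro x y (h | h)
    · exact Or.inl (hn h)
    · exact Or.inr (hn h)
  · intro f g hf hg
    rw [meas] at hf hg ⊢
    refine ⟨hr.conv f g hf.1 hg.1, fun z => ?_⟩
    unfold ElemThree.conv
    rw [← Equiv.sum_comp (Equiv.neg V)]
    refine Finset.sum_congr rfl fun x _ => ?_
    rw [Equiv.neg_apply, hf.2, ← hg.2]
    congr 2
    abel

lemma SRel.comap {r : V → V → Prop} (hr : SRel r) (e : V ≃+ V) : SRel fun x y => r (e x) (e y) := by
  refine ⟨⟨fun x => hr.equiv.refl _, hr.equiv.symm, hr.equiv.trans⟩, ?_, ?_, ?_⟩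
  · intro x hx
    rw [map_zero] at hx
    exact (map_eq_zero_iff e e.injective).1 (hr.zero _ hx)
  · intro x y hxy
    rw [map_neg, map_neg]
    exact hr.neg _ _ hxy
  · intro f g hf hg x y hxy
    have push : ∀ f, Meas (fun x y => r (e x) (e y)) f → Meas r fun x => f (e.symm x) :=
      fun f hf x y hxy => hf _ _ (by simpa using hxy)
    have hconv : ∀ z, ElemThree.conv f g z
        = ElemThree.conv (fun x => f (e.symm x)) (fun x => g (e.symm x)) (e z) := by
      intro z
      unfold ElemThree.conv
      refine Fintype.sum_equiv e.toEquiv _ _ fun x => ?_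
      simp
    rw [hconv, hconv]
    exact hr.conv _ _ (push f hf) (push g hg) _ _ hxy

lemma SchurRel.of_comap {r : V → V → Prop} (e : V ≃+ V)
    (h : SchurRel fun x y => r (e x) (e y)) : SchurRel r := by
  intro x y hxy
  obtain ⟨f, f0, fx, hf⟩ := h (e.symm x) (e.symm y) (by simpa using hxy)
  refine ⟨(e.symm.toEquiv.trans f).trans e.toEquiv, ?_, ?_, fun a b => ?_⟩
  · simp [f0]
  · simp [fx]
  · simpa using hf (e.symm a) (e.symm b)

/-! ### Linear maps on codes -/

/-- The linear map with matrix entries the ternary digits of `g`. -/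
def linV (g : ℕ) : V →+ V where
  toFun v :=
    ((g : ZMod 3) * v.1 + ((g / 27 : ℕ) : ZMod 3) * v.2.1 + ((g / 729 : ℕ) : ZMod 3) * v.2.2,
      ((g / 3 : ℕ) : ZMod 3) * v.1 + ((g / 81 : ℕ) : ZMod 3) * v.2.1
        + ((g / 2187 : ℕ) : ZMod 3) * v.2.2,
      ((g / 9 : ℕ) : ZMod 3) * v.1 + ((g / 243 : ℕ) : ZMod 3) * v.2.1
        + ((g / 6561 : ℕ) : ZMod 3) * v.2.2)
  map_zero' := by simp
  map_add' v w := by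
    ext <;> simp <;> ring

lemma linC_code (a b c : ℕ) (v : V) :
    linC a b c (code v) = ((a : ZMod 3) * v.1 + (b : ZMod 3) * v.2.1 + (c : ZMod 3) * v.2.2).val := by
  have h : linC a b c (code v)
      = (a * (code v % 3) + b * (code v / 3 % 3) + c * (code v / 9)) % 3 := rfl
  have h1 := ZMod.val_lt v.1
  have h2 := ZMod.val_lt v.2.1
  have h3 := ZMod.val_lt v.2.2
  have e1 : code v % 3 = v.1.val := by unfold code; omega
  have e2 : code v / 3 % 3 = v.2.1.val := by unfold code; omega
  have e3 : code v / 9 = v.2.2.val := by unfold code; omega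
  rw [h, e1, e2, e3, ← ZMod.val_natCast]
  simp

lemma lin_code (g : ℕ) (v : V) : lin g (code v) = code (linV g v) := by
  have h : lin g (code v) = linC g (g / 27) (g / 729) (code v)
      + (3 * linC (g / 3) (g / 81) (g / 2187) (code v)
        + 9 * linC (g / 9) (g / 243) (g / 6561) (code v)) := rfl
  rw [h, linC_code, linC_code, linC_code, code, linV]
  simp only [AddMonoidHom.coe_mk, ZeroHom.coe_mk]
  omega

lemma hintOK_sound {g d U W : ℕ} (h : hintOK g d U W = true) :
    ∃ e : V ≃+ V, (∀ v, code (e v) = lin g (code v)) ∧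
      ∀ x y, value U W (code (e x)) = value U W (code (e y)) → col d x = col d y := by
  simp only [hintOK, tab_eq, andR_iff, allR_iff, List.map_map, orR_iff, notR_iff,
    Nat.beq_eq] at h
  obtain ⟨h1, h2⟩ := h
  have inj : Function.Injective (linV g) := by
    rw [injective_iff_map_eq_zero]
    intro v hv
    have h3 := h1 (code v) (code_mem v)
    rw [lin_code, hv, code_zero] at h3
    exact code_inj ((h3.resolve_right (by simp)).trans code_zero.symm)
  obtain ⟨e, he⟩ : ∃ e : V ≃+ V, ∀ v, e v = linV g v :=
    ⟨AddEquiv.ofBijective (linV g) (Finite.injective_iff_bijective.1 inj), fun _ => rfl⟩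
  refine ⟨e, fun v => by rw [he, lin_code], fun x y hxy => ?_⟩
  by_cases hne : code x = code y
  · rw [code_inj hne]
  rw [factors_iff] at h2
  have h3 := @List.Pairwise.forall _ _ _ ⟨fun a b hab e => (hab e.symm).symm⟩ h2 _ (code_mem x) _
    (code_mem y) hne
  rw [Function.comp_apply, Function.comp_apply, lin_code, lin_code, ← he, ← he] at h3
  exact h3 hxy

lemma factors3_code {s t u : ℕ → ℕ} (h : factors3 (codes.map s) (codes.map t) (codes.map u) = true)
    {x y : V} (hne : x ≠ y) (hxy : s (code x) = s (code y)) :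
    (t (code x) = t (code y) ∨ t (code x) = u (code y)) ∨
      (t (code y) = t (code x) ∨ t (code y) = u (code x)) := by
  rw [factors3_iff] at h
  have h' : codes.Pairwise fun x y => (s x = s y → t x = t y ∨ t x = u y) ∨
      (s y = s x → t y = t x ∨ t y = u x) := h.imp fun hab => Or.inl hab
  rcases @List.Pairwise.forall _ _ _ ⟨fun a b hab => hab.symm⟩ h' _ (code_mem x) _ (code_mem y)
    (fun e => hne (code_inj e)) with h1 | h1
  · exact Or.inl (h1 hxy)
  · exact Or.inr (h1 hxy.symm)

/-! ### Enumeration of candidate classes -/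

lemma eq_pt {p : ℕ} {v : V} (h : p = code v) : v = pt p := by rw [h, pt_code]

lemma eq_neg_pt {p : ℕ} (hp : p ∈ codes) {v : V} (h : negC p = code v) : v = -pt p := by
  rw [← code_pt hp, negC_code] at h
  exact (code_inj h).symm

lemma negC_mem {p : ℕ} (hp : p ∈ codes) : negC p ∈ codes := by
  rw [← code_pt hp, negC_code]
  exact code_mem _

lemma enum1_sound {leaf : List ℕ → Bool} {S : V → Prop} [DecidablePred S]
    (hS : ∀ v, S (-v) ↔ S v) {l : List ℕ} (hl : ∀ p ∈ l, p ∈ codes) {ys : List ℕ}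
    (h : enum1 leaf l ys = true) :
    ∃ zs, leaf zs = true ∧ (∀ z ∈ zs, z ∈ ys ∨ z ∈ codes) ∧ ∀ v, zs.count (code v)
      = ys.count (code v) + if S v then (l.map fun p => [p, negC p].count (code v)).sum else 0 := by
  induction l generalizing ys with
  | nil => exact ⟨ys, h, fun z hz => Or.inl hz, fun v => by simp⟩
  | cons p l ih =>
    have e : enum1 leaf (p :: l) ys
      = andR (enum1 leaf l ys) (force (negC p) fun q => enum1 leaf l (q :: p :: ys)) := rfl
    rw [e, andR_iff, force_eq] at h
    have hp : p ∈ codes := hl p (by simp)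
    have hl' : ∀ p ∈ l, p ∈ codes := fun q hq => hl q (by simp [hq])
    by_cases hSp : S (pt p)
    · obtain ⟨zs, h1, h2, h3⟩ := ih hl' h.2
      refine ⟨zs, h1, fun z hz => ?_, fun v => ?_⟩
      · rcases h2 z hz with h4 | h4
        · rcases List.mem_cons.1 h4 with rfl | h4
          · exact Or.inr (negC_mem hp)
          · rcases List.mem_cons.1 h4 with rfl | h4
            · exact Or.inr hp
            · exact Or.inl h4
        · exact Or.inr h4
      · rw [h3]
        by_cases hv : S v
        · simp only [if_pos hv, List.map_cons, List.sum_cons, List.count_cons, List.count_nil]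
          omega
        · rw [if_neg hv, if_neg hv, List.count_cons_of_ne, List.count_cons_of_ne]
          · intro e; exact hv (eq_pt e ▸ hSp)
          · intro e; rw [eq_neg_pt hp e, hS] at hv; exact hv hSp
    · obtain ⟨zs, h1, h2, h3⟩ := ih hl' h.1
      refine ⟨zs, h1, h2, fun v => ?_⟩
      rw [h3]
      by_cases hv : S v
      · have e1 : ¬ p = code v := fun e => hSp (eq_pt e ▸ hv)
        have e2 : ¬ negC p = code v := fun e => hSp (by rw [eq_neg_pt hp e, hS] at hv; exact hv)
        simp [hv, List.count_cons, e1, e2]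
      · rw [if_neg hv, if_neg hv]

lemma enum2_sound {leaf : List ℕ → Bool} {S : V → Prop} [DecidablePred S] {l : List ℕ}
    (hS : ∀ p ∈ l, S (-pt p) ↔ ¬ S (pt p)) (hl : ∀ p ∈ l, p ∈ codes) {ys : List ℕ}
    (h : enum2 leaf l ys = true) :
    ∃ zs, leaf zs = true ∧ (∀ z ∈ zs, z ∈ ys ∨ z ∈ codes) ∧ ∀ v, zs.count (code v)
      = ys.count (code v) + if S v then (l.map fun p => [p, negC p].count (code v)).sum else 0 := by
  induction l generalizing ys with
  | nil => exact ⟨ys, h, fun z hz => Or.inl hz, fun v => by simp⟩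
  | cons p l ih =>
    have e : enum2 leaf (p :: l) ys
      = andR (enum2 leaf l (p :: ys)) (force (negC p) fun q => enum2 leaf l (q :: ys)) := rfl
    rw [e, andR_iff, force_eq] at h
    have hp : p ∈ codes := hl p (by simp)
    have hl' : ∀ p ∈ l, p ∈ codes := fun q hq => hl q (by simp [hq])
    have hS' : ∀ p ∈ l, S (-pt p) ↔ ¬ S (pt p) := fun q hq => hS q (by simp [hq])
    have hSp := hS p (by simp)
    -- `a` is the member of `{p, -p}` in `S`, and `b` is the other one
    have key : ∀ a b, enum2 leaf l (a :: ys) = true → a ∈ codes →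
        (∀ v, a = code v → S v) → (∀ v, b = code v → ¬ S v) →
        (∀ v, [p, negC p].count (code v) = [a, b].count (code v)) →
        ∃ zs, leaf zs = true ∧ (∀ z ∈ zs, z ∈ ys ∨ z ∈ codes) ∧ ∀ v, zs.count (code v)
          = ys.count (code v)
            + if S v then ((p :: l).map fun p => [p, negC p].count (code v)).sum else 0 := by
      intro a b hab ha ha' hb' hcount
      obtain ⟨zs, h1, h2, h3⟩ := ih hS' hl' hab
      refine ⟨zs, h1, fun z hz => ?_, fun v => ?_⟩
      · rcases h2 z hz with h4 | h4
        · rcases List.mem_cons.1 h4 with rfl | h4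
          · exact Or.inr ha
          · exact Or.inl h4
        · exact Or.inr h4
      · rw [h3, List.map_cons, List.sum_cons, hcount]
        by_cases hv : S v
        · have e : ¬ b = code v := fun e => hb' v e hv
          simp only [if_pos hv, List.count_cons, List.count_nil, beq_iff_eq, e, if_false]
          omega
        · rw [if_neg hv, if_neg hv, List.count_cons_of_ne]
          exact fun e => hv (ha' v e)
    by_cases h1 : S (pt p)
    · refine key p (negC p) h.1 hp (fun v e => eq_pt e ▸ h1) (fun v e hv => ?_) fun v => rfl
      rw [eq_neg_pt hp e] at hv
      exact hSp.1 hv h1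
    · refine key (negC p) p h.2 (negC_mem hp) (fun v e => ?_) (fun v e hv => h1 (eq_pt e ▸ hv))
        fun v => ?_
      · rw [eq_neg_pt hp e]
        exact hSp.2 h1
      · simp only [List.count_cons, List.count_nil]
        omega

lemma sum_filter (l : List ℕ) (P : ℕ → Bool) (f : ℕ → ℕ) (h : ∀ p ∈ l, P p = false → f p = 0) :
    ((l.filter P).map f).sum = (l.map f).sum := by
  induction l with
  | nil => rfl
  | cons a l ih =>
    have ih' := ih fun p hp => h p (by simp [hp])
    cases ha : P a with
    | true => simp [ha, ih']
    | false => simp [ha, ih', h a (by simp) ha]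

lemma half_filter_sum {c k : ℕ} {v : V} (hv : v ≠ 0) (h1 : col c v = k) (h2 : col c (-v) = k) :
    ((half.filter fun p => Nat.beq (look c p) k).map fun p => [p, negC p].count (code v)).sum
      = 1 := by
  rw [sum_filter, half_sum v hv]
  intro p hp hpk
  have hp' := half_codes hp
  have hk : look c p ≠ k := by
    rintro rfl
    simp at hpk
  have e1 : ¬ p = code v := by
    rintro rfl
    exact hk h1
  have e2 : ¬ negC p = code v := by
    intro e
    apply hk
    rw [← h2, col, eq_neg_pt hp' e, neg_neg, code_pt hp']
  simp [e1, e2]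

lemma exists_half {c k : ℕ} {v : V} (hv : v ≠ 0) (h1 : col c v = k) (h2 : col c (-v) = k) :
    ∃ p ps, (half.filter fun p => Nat.beq (look c p) k) = p :: ps := by
  have h := half_filter_sum hv h1 h2
  cases e : half.filter fun p => Nat.beq (look c p) k with
  | nil => rw [e] at h; simp at h
  | cons p ps => exact ⟨p, ps, rfl⟩

/-! ### Soundness of the checks -/

lemma checkP_color {i : ℕ} (h : checkP i = true) (v : V) :
    col (color i) v ≤ 26 ∧ (col (color i) v = col (color i) 0 → v = 0) := by
  unfold checkP at h
  unfold color
  generalize entry i = E at *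
  cases E with | mk c perms hs1 hs2 =>
  simp only [andR_iff, allR_iff, orR_iff, notR_iff, Nat.beq_eq, Nat.ble_eq] at h
  obtain ⟨h1, h2⟩ := h.1 (code v) (code_mem v)
  refine ⟨h1, fun e => ?_⟩
  rcases h2 with h2 | h2
  · exact code_inj (h2.trans code_zero.symm)
  · rw [col, col, code_zero] at e
    exact absurd e h2

/-- A permutation table accepted by `autOK` yields an automorphism. -/
lemma autOK_sound {c p : ℕ} (hz : ∀ v, col c v = col c 0 → v = 0) (h : autOK c p = true) :
    ∃ f : Equiv.Perm V, f 0 = 0 ∧ (∀ v, code (f v) = look p (code v)) ∧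
      ∀ a b, col c (f a - f b) = col c (a - b) := by
  simp only [autOK, andR_iff, allR_iff, force_eq, Nat.beq_eq, Nat.ble_eq] at h
  obtain ⟨h0, h1, h2⟩ := h
  obtain ⟨f, hf⟩ : ∃ f : V → V, ∀ v, code (f v) = look p (code v) :=
    ⟨fun v => pt (look p (code v)), fun v => code_pt (mem_codes (h1 _ (code_mem v)))⟩
  have h3 : ∀ a b, col c (f a - f b) = col c (a - b) := by
    intro a b
    have h4 := h2 _ (code_mem a) _ (code_mem b)
    rwa [← hf, ← hf, subC_code, subC_code] at h4
  have inj : Function.Injective f := by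
    intro a b hab
    refine sub_eq_zero.1 (hz _ ?_)
    rw [← h3, hab, sub_self]
  refine ⟨Equiv.ofBijective f (Finite.injective_iff_bijective.1 inj), ?_, hf, h3⟩
  apply code_inj
  rw [Equiv.ofBijective_apply, hf, code_zero, h0]

/-- If the colour classes of an entry are the classes of `r`, then `r` is schurian. -/
lemma checkP_sound {i : ℕ} (h : checkP i = true) {r : V → V → Prop}
    (hr : ∀ x y, r x y ↔ col (color i) x = col (color i) y) : SchurRel r := by
  have hz : ∀ v, col (color i) v = col (color i) 0 → v = 0 := fun v => (checkP_color h v).2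
  unfold checkP at h
  unfold color at hr hz
  generalize entry i = E at *
  cases E with | mk c perms hs1 hs2 =>
  simp only [andR_iff, allR_iff, anyR_iff, orR_iff, notR_iff, Nat.beq_eq, Nat.ble_eq] at h hr hz
  obtain ⟨-, h1, h2⟩ := h
  -- every point is moved to the first point of its colour class
  have key : ∀ n, ∀ x, code x = n → ∃ f : Equiv.Perm V, f 0 = 0 ∧
      (∀ a b, col c (f a - f b) = col c (a - b)) ∧
        ∀ y, col c y = col c x → code (f x) ≤ code y := by
    intro n
    induction n using Nat.strong_induction_on with | _ n ih =>
    rintro x rfl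
    rcases h2 (code x) (code_mem x) with ⟨p, hp, hlt⟩ | hmin
    · obtain ⟨f, f0, fp, fc⟩ := autOK_sound hz (h1 p hp)
      obtain ⟨g, g0, gc, gm⟩ := ih (code (f x)) (by rw [fp]; exact hlt) (f x) rfl
      refine ⟨f.trans g, by simp [f0, g0], fun a b => ?_, fun y hy => gm y ?_⟩
      · rw [Equiv.trans_apply, Equiv.trans_apply, gc, fc]
      · have := fc x 0
        rw [f0, sub_zero, sub_zero] at this
        rw [this, hy]
    · refine ⟨Equiv.refl V, rfl, fun a b => rfl, fun y hy => ?_⟩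
      exact (hmin (code y) (code_mem y)).resolve_right (fun hn => hn hy)
  intro x y hxy
  obtain ⟨f, f0, fc, fm⟩ := key _ x rfl
  obtain ⟨g, g0, gc, gm⟩ := key _ y rfl
  have colf : col c (f x) = col c x := by
    have := fc x 0
    rwa [f0, sub_zero, sub_zero] at this
  have colg : col c (g y) = col c y := by
    have := gc y 0
    rwa [g0, sub_zero, sub_zero] at this
  have hxy' := (hr x y).1 hxy
  have hfg : f x = g y := code_inj (le_antisymm
    (fm _ (by rw [colg, hxy'])) (gm _ (by rw [colf, hxy'])))
  refine ⟨f.trans g.symm, ?_, ?_, fun a b => (hr _ _).2 ?_⟩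
  · rw [Equiv.trans_apply, f0, Equiv.symm_apply_eq, g0]
  · rw [Equiv.trans_apply, hfg, Equiv.symm_apply_apply]
  · rw [Equiv.trans_apply, Equiv.trans_apply, ← gc, Equiv.apply_symm_apply,
      Equiv.apply_symm_apply, fc]

lemma check1_spec {i : ℕ} (h : check1 i = true) : ∃ hs, ∀ k ∈ codes, ∀ p ps,
    (half.filter fun p => Nat.beq (look (color i) p) k) = p :: ps →
      enum1 (leaf1 i (base (color i)) hs (p :: ps)) ps [negC p, p] = true := by
  unfold check1 at h
  unfold color
  generalize entry i = E at *
  cases E with | mk c perms hs1 hs2 =>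
  refine ⟨hs1, fun k hk p ps hp => ?_⟩
  simp only [force_eq, allR_iff] at h
  have h' := h k hk
  rw [filterR_eq, hp] at h'
  exact h'

lemma check2_spec {i : ℕ} (h : check2 i = true) : ∃ hs, ∀ k ∈ codes, ∀ p ps,
    (half.filter fun p => Nat.beq (look (color i) p) k) = p :: ps → look (color i) (negC p) = k →
      enum2 (leaf2 i (color i) (base (color i)) hs) ps [p] = true := by
  unfold check2 at h
  unfold color
  generalize entry i = E at *
  cases E with | mk c perms hs1 hs2 =>
  refine ⟨hs2, fun k hk p ps hp hpk => ?_⟩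
  simp only [force_eq, allR_iff] at h
  have h' := h k hk
  rw [filterR_eq, hp] at h'
  exact (impR_iff _ _).1 h' (by rw [Nat.beq_eq]; exact hpk)

/-- If a relation with symmetric classes is strictly finer than the colouring of entry `i`, then up
to a linear map it refines the colouring of a later entry. -/
lemma step1 {i : ℕ} (hP : checkP i = true) (h1 : check1 i = true) {r : V → V → Prop}
    (hr : SRel r) (hneg : ∀ x, r x (-x)) (hm : Meas r (col (color i))) {x y : V}
    (hxy : col (color i) x = col (color i) y) (hn : ¬ r x y) :
    ∃ j, i < j ∧ j ≤ 20 ∧ ∃ e : V ≃+ V, Meas (fun x y => r (e x) (e y)) (col (color j)) := by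
  classical
  have hs : ∀ {x y}, r x y → r y x := hr.equiv.symm
  have ht : ∀ {x y z}, r x y → r y z → r x z := hr.equiv.trans
  have x0 : x ≠ 0 := by
    rintro rfl
    rw [(checkP_color hP y).2 hxy.symm] at hn
    exact hn (hr.equiv.refl _)
  have hcn : ∀ v, col (color i) (-v) = col (color i) v := fun v => (hm _ _ (hneg v)).symm
  obtain ⟨hints, hspec⟩ := check1_spec h1
  obtain ⟨p, ps, hps⟩ := exists_half x0 (k := col (color i) x) rfl (hcn x)
  have hmem : ∀ q ∈ p :: ps, q ∈ codes ∧ look (color i) q = col (color i) x := by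
    intro q hq
    rw [← hps, List.mem_filter, Nat.beq_eq] at hq
    exact ⟨half_codes hq.1, hq.2⟩
  have hp := (hmem p (by simp)).1
  have hpk : col (color i) (pt p) = col (color i) x := by
    rw [col, code_pt hp]
    exact (hmem p (by simp)).2
  have hSneg : ∀ v, r (pt p) (-v) ↔ r (pt p) v :=
    fun v => ⟨fun h => ht h (hs (hneg v)), fun h => ht h (hneg v)⟩
  obtain ⟨zs, hz1, hz2, hz3⟩ := enum1_sound (S := fun v => r (pt p) v) hSneg
    (fun q hq => (hmem q (by simp [hq])).1)
    (hspec _ (mem_codes (checkP_color hP x).1) p ps hps)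
  have hzs : ∀ z ∈ zs, z ∈ codes := by
    intro z hz
    rcases hz2 z hz with h | h
    · simp only [List.mem_cons, List.not_mem_nil, or_false] at h
      rcases h with rfl | rfl
      · exact negC_mem hp
      · exact hp
    · exact h
  have hcount : ∀ v, zs.count (code v) = if r (pt p) v then 1 else 0 := by
    intro v
    rw [hz3]
    by_cases hv : r (pt p) v
    · have hvk : col (color i) v = col (color i) x := (hm _ _ hv).symm.trans hpk
      have v0 : v ≠ 0 := by
        rintro rfl
        exact x0 ((checkP_color hP x).2 hvk.symm)
      have := half_filter_sum v0 hvk ((hcn v).trans hvk)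
      rw [hps, List.map_cons, List.sum_cons] at this
      simp only [List.count_cons, List.count_nil] at this ⊢
      rw [if_pos hv, if_pos hv]
      omega
    · rw [if_neg hv, if_neg hv, List.count_cons_of_ne, List.count_cons_of_ne, List.count_nil]
      · intro e
        rw [eq_pt e] at hv
        exact hv (hr.equiv.refl _)
      · intro e
        rw [eq_neg_pt hp e] at hv
        exact hv (hneg _)
  rw [leaf1, orR_iff] at hz1
  rcases hz1 with hfull | href
  · -- the class of `p` is the whole colour class, which contains both `x` and `y`
    exfalso
    simp only [allR_iff, anyR_iff, Nat.beq_eq] at hfull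
    have hin : ∀ q ∈ p :: ps, r (pt p) (pt q) := by
      intro q hq
      obtain ⟨z, hz, rfl⟩ := hfull q hq
      by_contra hcon
      have := hcount (pt q)
      rw [if_neg hcon, code_pt (hzs _ hz)] at this
      exact (List.count_pos_iff.2 hz).ne' this
    have hall : ∀ v, v ≠ 0 → col (color i) v = col (color i) x → r (pt p) v := by
      intro v v0 hv
      have hq : ∀ w, code w ∈ half → col (color i) w = col (color i) x → r (pt p) w := by
        intro w hw hwk
        have := hin (code w) (by rw [← hps, List.mem_filter, Nat.beq_eq]; exact ⟨hw, hwk⟩)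
        rwa [pt_code] at this
      rcases half_or v v0 with h | h
      · exact hq v h hv
      · exact (hSneg v).1 (hq _ h ((hcn v).trans hv))
    refine hn (ht (hs (hall x x0 rfl)) (hall y ?_ hxy.symm))
    rintro rfl
    exact x0 ((checkP_color hP x).2 hxy)
  · obtain ⟨U, W, hUW, hk⟩ := refute_sound hr hm hzs hcount
      (fun a b hab => ⟨fun h => ht h hab, fun h => ht h (hs hab)⟩)
      (fun a b ha hb => ht (hs ha) hb) href
    simp only [force_eq, andR_iff, Nat.ble_eq] at hk
    obtain ⟨e, -, he⟩ := hintOK_sound hk.2.2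
    exact ⟨_, hk.1, hk.2.1, e, fun a b hab => he a b (hUW _ _ hab)⟩

/-- If each class of `r` lies in a colour class of entry `i`, which lies in a class of the
symmetrization of `r`, and the first of these inclusions is not always an equality, then up to
a linear map the inclusions also hold for a later entry. -/
lemma step2 {i : ℕ} (hP : checkP i = true) (h2 : check2 i = true) {r : V → V → Prop}
    (hr : SRel r) (hm : Meas r (col (color i)))
    (hsym : ∀ x y, col (color i) x = col (color i) y → sym r x y) {x y : V}
    (hxy : col (color i) x = col (color i) y) (hn : ¬ r x y) :
    ∃ j, i < j ∧ j ≤ 67 ∧ ∃ e : V ≃+ V, Meas (fun x y => r (e x) (e y)) (col (color j)) ∧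
      ∀ x y, col (color j) x = col (color j) y → sym r (e x) (e y) := by
  classical
  have hs : ∀ {x y}, r x y → r y x := hr.equiv.symm
  have ht : ∀ {x y z}, r x y → r y z → r x z := hr.equiv.trans
  have hng : ∀ {x y}, r x (-y) → r (-x) y := fun h => by simpa using hr.neg _ _ h
  have x0 : x ≠ 0 := by
    rintro rfl
    rw [(checkP_color hP y).2 hxy.symm] at hn
    exact hn (hr.equiv.refl _)
  set k := col (color i) x with hk
  have hxk : col (color i) (-x) = k :=
    (hm _ _ (hng ((hsym x y hxy).resolve_left hn))).trans hxy.symm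
  have hcn : ∀ v, col (color i) v = k → col (color i) (-v) = k := by
    intro v hv
    rcases hsym x v hv.symm with h | h
    · exact (hm _ _ (hr.neg _ _ h)).symm.trans hxk
    · exact (hm _ _ h).symm
  have hanti : ∀ v, col (color i) v = k → ¬ r v (-v) := by
    intro v hv h
    have hall : ∀ w, col (color i) w = k → r w v := by
      intro w hw
      rcases hsym w v (hw.trans hv.symm) with h' | h'
      · exact h'
      · exact ht h' (hs h)
    exact hn (ht (hall x rfl) (hs (hall y hxy.symm)))
  obtain ⟨hints, hspec⟩ := check2_spec h2
  obtain ⟨p, ps, hps⟩ := exists_half x0 (k := k) rfl hxk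
  have hmem : ∀ q ∈ p :: ps, q ∈ codes ∧ col (color i) (pt q) = k := by
    intro q hq
    rw [← hps, List.mem_filter, Nat.beq_eq] at hq
    refine ⟨half_codes hq.1, ?_⟩
    rw [col, code_pt (half_codes hq.1)]
    exact hq.2
  obtain ⟨hp, hpk⟩ := hmem p (by simp)
  have hS : ∀ v, col (color i) v = k → (r (pt p) (-v) ↔ ¬ r (pt p) v) := by
    intro v hv
    refine ⟨fun h h' => hanti v hv (ht (hs h') h), fun h => ?_⟩
    exact (hsym _ _ (hpk.trans hv.symm)).resolve_left h
  obtain ⟨zs, hz1, hz2, hz3⟩ := enum2_sound (S := fun v => r (pt p) v)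
    (fun q hq => hS _ (hmem q (by simp [hq])).2) (fun q hq => (hmem q (by simp [hq])).1)
    (hspec k (mem_codes (checkP_color hP x).1) p ps hps (by
      have := hcn _ hpk
      rwa [col, ← negC_code, code_pt hp] at this))
  have hzs : ∀ z ∈ zs, z ∈ codes := by
    intro z hz
    rcases hz2 z hz with h | h
    · rw [List.mem_singleton.1 h]
      exact hp
    · exact h
  have hcount : ∀ v, zs.count (code v) = if r (pt p) v then 1 else 0 := by
    intro v
    rw [hz3]
    by_cases hv : r (pt p) v
    · have hvk : col (color i) v = k := (hm _ _ hv).symm.trans hpk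
      have v0 : v ≠ 0 := by
        rintro rfl
        exact x0 ((checkP_color hP x).2 hvk.symm)
      have := half_filter_sum v0 hvk (hcn v hvk)
      have e : ¬ negC p = code v := by
        intro e
        rw [eq_neg_pt hp e] at hv
        exact hanti _ hpk hv
      rw [hps, List.map_cons, List.sum_cons] at this
      simp only [List.count_cons, List.count_nil, beq_iff_eq, e, if_false] at this ⊢
      rw [if_pos hv, if_pos hv]
      omega
    · rw [if_neg hv, if_neg hv, List.count_cons_of_ne, List.count_nil]
      intro e
      rw [eq_pt e] at hv
      exact hv (hr.equiv.refl _)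
  obtain ⟨U, W, hUW, hk⟩ := refute_sound hr hm hzs hcount
    (fun a b hab => ⟨fun h => ht h hab, fun h => ht h (hs hab)⟩)
    (fun a b ha hb => ht (hs ha) hb) hz1
  rw [force_eq] at hk
  cases hb : Nat.beq (findHint hints (Nat.mod U radix)) 0 with
  | true =>
    -- impossible, as points of the same colour are related up to sign
    exfalso
    rw [hb] at hk
    refine (notR_iff _).1 hk ?_
    simp only [symConst, tab_eq]
    rw [factors3_iff]
    refine List.Pairwise.imp_of_mem (R := fun _ _ => True) ?_
      (List.pairwise_of_forall fun _ _ => trivial)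
    intro a b ha hb _ hab
    have := hsym (pt a) (pt b) (by rw [col, col, code_pt ha, code_pt hb]; exact hab)
    rcases this with h | h
    · have := hUW _ _ h
      simp only [code_pt ha, code_pt hb] at this
      exact Or.inl this
    · have := hUW _ _ h
      simp only [← negC_code, code_pt ha, code_pt hb] at this
      exact Or.inr this
  | false =>
    rw [hb] at hk
    simp only [force_eq, andR_iff, Nat.ble_eq] at hk
    obtain ⟨e, hlin, he⟩ := hintOK_sound hk.2.2.1
    refine ⟨_, hk.1, hk.2.1, e, fun a b hab => he a b (hUW _ _ hab), fun a b hab => ?_⟩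
    by_cases hne : a = b
    · rw [hne]
      exact Or.inl (hr.equiv.refl _)
    have h3 := hk.2.2.2
    simp only [symOK, tab_eq, List.map_map] at h3
    have h4 := factors3_code h3 hne hab
    simp only [Function.comp_apply, ← hlin, negC_code] at h4
    have hs' : ∀ {a b}, sym r a b → sym r b a := hr.sym.equiv.symm
    have hn' : ∀ {a b}, sym r a (-b) → sym r a b := by
      rintro a b (h | h)
      · exact Or.inr h
      · exact Or.inl (by simpa using h)
    rcases h4 with (h | h) | (h | h)
    · exact hsym _ _ h
    · exact hn' (hsym _ _ h)
    · exact hs' (hsym _ _ h)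
    · exact hs' (hn' (hsym _ _ h))

/-! ### Induction over the table -/

lemma checkP_all : ((List.range 68).all checkP) = true := by decide +kernel

lemma check1_all : ((List.range 21).all check1) = true := by decide +kernel

lemma check2_all : ((List.range 68).all check2) = true := by decide +kernel

lemma checkP_le {i : ℕ} (hi : i ≤ 67) : checkP i = true :=
  List.all_eq_true.1 checkP_all i (List.mem_range.2 (by omega))

lemma check1_le {i : ℕ} (hi : i ≤ 20) : check1 i = true :=
  List.all_eq_true.1 check1_all i (List.mem_range.2 (by omega))

lemma check2_le {i : ℕ} (hi : i ≤ 67) : check2 i = true :=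
  List.all_eq_true.1 check2_all i (List.mem_range.2 (by omega))

/-- The relation `r` is schurian if the colour classes of an entry lie between the classes of `r` and
those of its symmetrization; by induction on the number `n` of entries that follow. -/
lemma schurRel_of_between {n i : ℕ} (hi : i ≤ 67) (hn : 67 - i ≤ n) {r : V → V → Prop}
    (hr : SRel r) (hm : Meas r (col (color i)))
    (hsym : ∀ x y, col (color i) x = col (color i) y → sym r x y) : SchurRel r := by
  induction n generalizing i r with
  | zero =>
    by_cases h : ∀ x y, col (color i) x = col (color i) y → r x y
    · exact checkP_sound (checkP_le hi) fun x y => ⟨hm x y, h x y⟩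
    · push Not at h
      obtain ⟨x, y, hxy, hne⟩ := h
      obtain ⟨j, hij, hj, -⟩ := step2 (checkP_le hi) (check2_le hi) hr hm hsym hxy hne
      omega
  | succ n ih =>
    by_cases h : ∀ x y, col (color i) x = col (color i) y → r x y
    · exact checkP_sound (checkP_le hi) fun x y => ⟨hm x y, h x y⟩
    · push Not at h
      obtain ⟨x, y, hxy, hne⟩ := h
      obtain ⟨j, hij, hj, e, he1, he2⟩ := step2 (checkP_le hi) (check2_le hi) hr hm hsym hxy hne
      refine SchurRel.of_comap e (ih hj (by omega) (hr.comap e) he1 fun x y hxy => ?_)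
      have := he2 x y hxy
      rwa [sym, ← map_neg] at this

/-- The relation `r` is schurian if its symmetrization refines the colouring of one of the first 21
entries; by induction on the number `n` of these that follow. -/
lemma schurRel_of_sym {n i : ℕ} (hi : i ≤ 20) (hn : 20 - i ≤ n) {r : V → V → Prop}
    (hr : SRel r) (hm : Meas (sym r) (col (color i))) : SchurRel r := by
  have hneg : ∀ x, sym r x (-x) := fun x => Or.inr (by rw [neg_neg]; exact hr.equiv.refl x)
  have done : (∀ x y, col (color i) x = col (color i) y → sym r x y) → SchurRel r := fun h =>
    schurRel_of_between (by omega) le_rfl hr (fun x y hxy => hm x y (Or.inl hxy)) h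
  induction n generalizing i r with
  | zero =>
    by_cases h : ∀ x y, col (color i) x = col (color i) y → sym r x y
    · exact done h
    · push Not at h
      obtain ⟨x, y, hxy, hne⟩ := h
      obtain ⟨j, hij, hj, -⟩ :=
        step1 (checkP_le (by omega)) (check1_le hi) hr.sym hneg hm hxy hne
      omega
  | succ n ih =>
    by_cases h : ∀ x y, col (color i) x = col (color i) y → sym r x y
    · exact done h
    · push Not at h
      obtain ⟨x, y, hxy, hne⟩ := h
      obtain ⟨j, hij, hj, e, he⟩ :=
        step1 (checkP_le (by omega)) (check1_le hi) hr.sym hneg hm hxy hne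
      have hm' : Meas (sym fun x y => r (e x) (e y)) (col (color j)) := by
        intro x y hxy
        refine he x y ?_
        change sym r (e x) (e y)
        rw [sym, ← map_neg]
        exact hxy
      refine SchurRel.of_comap e (ih hj (by omega) (hr.comap e) hm' ?_ ?_)
      · intro x
        exact Or.inr (by rw [neg_neg]; exact hr.equiv.refl _)
      · exact fun h' => schurRel_of_between (by omega) le_rfl (hr.comap e)
          (fun x y hxy => hm' x y (Or.inl hxy)) h'

lemma color_zero (v : V) : col (color 0) v = if v = 0 then 0 else 1 := by
  revert v; decide +kernel

/-- Every S-ring over `C₃³` is schurian, in terms of the relation of lying in the same basic set. -/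
theorem SRel.schurRel {r : V → V → Prop} (hr : SRel r) : SchurRel r := by
  refine schurRel_of_sym (Nat.zero_le 20) le_rfl hr fun x y hxy => ?_
  have h : x = 0 ↔ y = 0 := by
    constructor
    · rintro rfl
      exact hr.sym.zero y hxy
    · rintro rfl
      exact hr.sym.zero x (hr.sym.equiv.symm hxy)
  simp only [color_zero, h]

/-! ### From S-rings to relations -/

section Transfer

open SRingPaper

variable {G : Type*} [Group G] [Finite G]

/-- The basic set that contains `g`. -/
def basicSet (A : SRing G) (g : G) : Set G := (A.exists_mem g).choose

lemma basicSet_mem (A : SRing G) (g : G) : basicSet A g ∈ A.parts :=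
  (A.exists_mem g).choose_spec.1

lemma self_mem_basicSet (A : SRing G) (g : G) : g ∈ basicSet A g :=
  (A.exists_mem g).choose_spec.2

lemma basicSet_eq (A : SRing G) {X : Set G} (hX : X ∈ A.parts) {g : G} :
    basicSet A g = X ↔ g ∈ X :=
  ⟨fun h => h ▸ self_mem_basicSet A g,
    fun h => A.eq_of_mem _ (basicSet_mem A g) _ hX g (self_mem_basicSet A g) h⟩

lemma basicSet_inv (A : SRing G) {g h : G} (hgh : basicSet A g = basicSet A h) :
    basicSet A g⁻¹ = basicSet A h⁻¹ := by
  have key : ∀ k, basicSet A k⁻¹ = (basicSet A k)⁻¹ := fun k =>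
    (basicSet_eq A (A.inv_mem _ (basicSet_mem A k))).2 (by simpa using self_mem_basicSet A k)
  rw [key, key, hgh]

lemma structConst_eq (A : SRing G) (φ : V ≃ G) (hφ : ∀ a b, φ (a + b) = φ a * φ b)
    {X Y : Set G} (hX : X ∈ A.parts) (hY : Y ∈ A.parts) (z : V) :
    structConst X Y (φ z)
      = Nat.card {x : V // (basicSet A (φ x), basicSet A (φ (z - x))) = (X, Y)} := by
  unfold structConst
  symm
  refine Nat.card_congr ⟨fun x => ⟨(φ x.1, φ (z - x.1)), ?_⟩, fun p => ⟨φ.symm p.1.1, ?_⟩, ?_, ?_⟩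
  · obtain ⟨x, hx⟩ := x
    rw [Prod.mk.injEq, basicSet_eq A hX, basicSet_eq A hY] at hx
    refine ⟨hx.1, hx.2, ?_⟩
    rw [← hφ]
    congr 1
    abel
  · obtain ⟨⟨a, b⟩, ha, hb, hab⟩ := p
    have hz : z - φ.symm a = φ.symm b := by
      rw [Equiv.eq_symm_apply, ← mul_right_inj a, hab]
      obtain ⟨a, rfl⟩ := φ.surjective a
      rw [φ.symm_apply_apply, ← hφ, add_sub_cancel]
    rw [Prod.mk.injEq, basicSet_eq A hX, basicSet_eq A hY, hz, φ.apply_symm_apply,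
      φ.apply_symm_apply]
    exact ⟨ha, hb⟩
  · intro x
    simp
  · rintro ⟨⟨a, b⟩, ha, hb, hab⟩
    have hz : φ (z - φ.symm a) = b := by
      rw [← mul_right_inj a, hab]
      obtain ⟨a, rfl⟩ := φ.surjective a
      rw [φ.symm_apply_apply, ← hφ, add_sub_cancel]
    simp [hz]

lemma sRel_basicSet (A : SRing G) (φ : V ≃ G) (hφ : ∀ a b, φ (a + b) = φ a * φ b) :
    SRel fun x y => basicSet A (φ x) = basicSet A (φ y) := by
  classical
  have φ0 : φ 0 = 1 := by
    have := hφ 0 0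
    rwa [add_zero, left_eq_mul] at this
  have φneg : ∀ a, φ (-a) = (φ a)⁻¹ := fun a => by
    rw [eq_inv_iff_mul_eq_one, ← hφ, neg_add_cancel, φ0]
  refine ⟨⟨fun _ => rfl, fun h => h.symm, fun h h' => h.trans h'⟩, ?_, ?_, ?_⟩
  · intro x hx
    rw [φ0, (basicSet_eq A A.one_mem).2 (Set.mem_singleton 1), eq_comm,
      basicSet_eq A A.one_mem, Set.mem_singleton_iff, ← φ0] at hx
    exact φ.injective hx
  · intro x y hxy
    rw [φneg, φneg]
    exact basicSet_inv A hxy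
  · intro f g hf hg z z' hz
    have := Fintype.ofFinite (Set G)
    have lift : ∀ f : V → ℕ, Meas (fun x y => basicSet A (φ x) = basicSet A (φ y)) f →
        ∃ F : Set G → ℕ, ∀ x, f x = F (basicSet A (φ x)) := by
      intro f hf
      refine ⟨fun X => if h : ∃ x, basicSet A (φ x) = X then f h.choose else 0, fun x => ?_⟩
      have h : ∃ y, basicSet A (φ y) = basicSet A (φ x) := ⟨x, rfl⟩
      beta_reduce
      rw [dif_pos h]
      exact hf _ _ h.choose_spec.symm
    obtain ⟨F, hF⟩ := lift f hf
    obtain ⟨F', hF'⟩ := lift g hg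
    -- the convolution is a combination of structure constants
    have key : ∀ z, conv f g z = ∑ P : Set G × Set G,
        Nat.card {x : V // (basicSet A (φ x), basicSet A (φ (z - x))) = P} * (F P.1 * F' P.2) := by
      intro z
      unfold conv
      rw [← Finset.sum_fiberwise Finset.univ
        (fun x => (basicSet A (φ x), basicSet A (φ (z - x))))]
      refine Finset.sum_congr rfl fun P _ => ?_
      rw [Nat.card_eq_fintype_card, Fintype.card_subtype, ← smul_eq_mul, ← Finset.sum_const]
      refine Finset.sum_congr rfl fun x hx => ?_
      rw [hF, hF', ← (Finset.mem_filter.1 hx).2]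
    rw [key, key]
    refine Finset.sum_congr rfl fun P _ => ?_
    congr 1
    obtain ⟨X, Y⟩ := P
    by_cases hXY : X ∈ A.parts ∧ Y ∈ A.parts
    · rw [← structConst_eq A φ hφ hXY.1 hXY.2, ← structConst_eq A φ hφ hXY.1 hXY.2]
      refine A.structConst_const _ hXY.1 _ hXY.2 _ (basicSet_mem A (φ z)) _
        (self_mem_basicSet A _) _ ?_
      rw [hz]
      exact self_mem_basicSet A _
    · have hempty : ∀ z, IsEmpty {x : V // (basicSet A (φ x), basicSet A (φ (z - x))) = (X, Y)} := by
        refine fun z => ⟨fun x => hXY ?_⟩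
        obtain ⟨x, hx⟩ := x
        rw [Prod.mk.injEq] at hx
        exact ⟨hx.1 ▸ basicSet_mem A _, hx.2 ▸ basicSet_mem A _⟩
      have h1 := hempty z
      have h2 := hempty z'
      rw [Nat.card_of_isEmpty, Nat.card_of_isEmpty]

lemma isSchurian_of_schurRel (A : SRing G) (φ : V ≃ G) (hφ : ∀ a b, φ (a + b) = φ a * φ b)
    (h : SchurRel fun x y => basicSet A (φ x) = basicSet A (φ y)) :
    IsSchurian A := by
  have φ0 : φ 0 = 1 := by
    have := hφ 0 0
    rwa [add_zero, left_eq_mul] at this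
  have φsub : ∀ a b, φ (a - b) = φ a / φ b := fun a b => by
    rw [eq_div_iff_mul_eq', ← hφ, sub_add_cancel]
  let K : Subgroup (Equiv.Perm G) :=
    { carrier := {f | ∀ a b, basicSet A (f a / f b) = basicSet A (a / b)}
      one_mem' := fun a b => rfl
      mul_mem' := fun {f g} hf hg a b => (hf (g a) (g b)).trans (hg a b)
      inv_mem' := fun {f} hf a b => by
        have := hf (f⁻¹ a) (f⁻¹ b)
        simp only [Equiv.Perm.inv_def, Equiv.apply_symm_apply] at this
        exact this.symm }
  have orbit : ∀ g, {h : G | ∃ f ∈ K, f 1 = 1 ∧ f g = h} = basicSet A g := by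
    intro g
    ext k
    constructor
    · rintro ⟨f, hf, f1, rfl⟩
      have := hf g 1
      rw [f1, div_one, div_one] at this
      rw [← this]
      exact self_mem_basicSet A _
    · intro hk
      have hk' := (basicSet_eq A (basicSet_mem A g)).2 hk
      obtain ⟨f, f0, fg, hf⟩ := h (φ.symm g) (φ.symm k) (by simpa using hk'.symm)
      refine ⟨(φ.symm.trans f).trans φ, fun a b => ?_, ?_, ?_⟩
      · have := hf (φ.symm a) (φ.symm b)
        simpa only [φsub, Equiv.apply_symm_apply, Equiv.trans_apply] using this
      · simp [← φ0, f0]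
      · simp [fg]
  refine ⟨K, fun g a b => ?_, ?_⟩
  · simp
  · ext X
    constructor
    · intro hX
      obtain ⟨g, hg⟩ := A.nonempty_mem X hX
      exact ⟨g, by rw [orbit, (basicSet_eq A hX).2 hg]⟩
    · rintro ⟨g, rfl⟩
      rw [orbit]
      exact basicSet_mem A g

end Transfer

end ElemThree

end

open SRingPaper in
/-- every S-ring over the elementary abelian group
`C_3 × C_3 × C_3` is schurian. -/
theorem sring_over_elementary_three_group_schurian
    (G : Type*) [Group G] [Finite G]
    (hG : Nonempty (G ≃* Multiplicative (ZMod 3 × ZMod 3 × ZMod 3)))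
    (A : SRing G) :
    IsSchurian A := by
  obtain ⟨e⟩ := hG
  have hφ : ∀ a b : ElemThree.V, (Multiplicative.ofAdd.trans e.symm.toEquiv) (a + b)
      = (Multiplicative.ofAdd.trans e.symm.toEquiv) a
        * (Multiplicative.ofAdd.trans e.symm.toEquiv) b :=
    fun a b => map_mul e.symm (Multiplicative.ofAdd a) (Multiplicative.ofAdd b)
  exact ElemThree.isSchurian_of_schurRel A _ hφ (ElemThree.sRel_basicSet A _ hφ).schurRel
end

section
/- Let G = ⟨a⟩ × ⟨b⟩ × ⟨c⟩ with |a| = |b| = 2 and |c| = 4 (so G ≅ C_2 × C_2 × C_4), and let f be the automorphism of G determined by a ↦ a, b ↦ bac², c ↦ ca (an automorphism of order 2). Then the cyclotomic S-ring 𝒜 = cyc(⟨f⟩, G) admits an algebraic automorphism that is not induced by any combinatorial isomorphism; in particular, 𝒜 is not separable with respect to the class 𝒦_A of finite abelian groups. -/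
/-!
In coordinates the group is `C₂ × C₂ × C₄`. Put `L = ⟨a, c²⟩`, the set of fixed points of `f`. The
basic sets are the four singletons in `L` together with two cosets of `⟨a⟩` in `cL`, two cosets of
`⟨ac²⟩` in `bL` and two cosets of `⟨c²⟩` in `bcL`. The product of basic sets from different
nontrivial cosets of `L` is a full coset of `L`, so the structure constants carry little
information; they survive exchanging `c²` with `ac²` and the basic sets in `bL` with those in `bcL`
(`{b, bac²} ↔ {bc, bc³}`, `{ba, bc²} ↔ {abc, abc³}`). This is the algebraic automorphism used here.
It is realised on points by a permutation `σ`, and `N_σ` checks that structure constants are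
preserved.

It is not induced (`obstruction`, `not_inducedBy_φ`). After a translation, an inducing permutation
`g` fixes `1`, and the pairs of `1` with `b`, `c`, `bc` give `g b = bc·c²ᵘ`, `g (bc) = b·(ac²)ᵛ`,
`g c = c·aʷ`. The pairs among `b`, `c`, `bc` then force `u + v = 1`, `w = u` and `v = w` modulo 2,
which is impossible.

For the failure of separability the same argument is applied with a second copy of the group as
target, since the definition quantifies over abelian groups in an unrelated universe.
-/

open scoped Pointwise

namespace SRingPaper.C2C2C4

/-! ### The concrete model -/

/-- The group `C₂ × C₂ × C₄`; `(i, j, k)` stands for `aⁱ bʲ cᵏ`. -/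
abbrev C : Type := Multiplicative (ZMod 2 × ZMod 2 × ZMod 4)

/-- The element `aⁱ bʲ cᵏ` of `C`. -/
def mk (i j : ZMod 2) (k : ZMod 4) : C := Multiplicative.ofAdd (i, j, k)

/-- The automorphism `a ↦ a`, `b ↦ bac²`, `c ↦ ca` in coordinates. -/
def f₀ (x : C) : C :=
  mk (x.toAdd.1 + x.toAdd.2.1 + (x.toAdd.2.2.val : ZMod 2)) x.toAdd.2.1
    (x.toAdd.2.2 + 2 * (x.toAdd.2.1.val : ZMod 4))

/-- A permutation of `C` (not a group automorphism) that maps `f₀`-orbits to `f₀`-orbits. On the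
orbits it fixes those in `⟨a⟩` and in the coset of `c` modulo `⟨a, c²⟩`, swaps `c²` with `ac²`, and
swaps the cosets of `b` and `bc` through `{b, bac²} ↔ {bc, bc³}`, `{ba, bc²} ↔ {abc, abc³}`.
In formulas, it adds `⌊k/2⌋` to `i` and, when `j = 1`, flips the parity bit of `k`. -/
def σ (x : C) : C :=
  mk (x.toAdd.1 + ((x.toAdd.2.2.val / 2 : ℕ) : ZMod 2)) x.toAdd.2.1
    (x.toAdd.2.2 + (x.toAdd.2.1.val : ZMod 4) * (1 + 2 * x.toAdd.2.2))

/-- The orbit of `x` under the involution `f₀`. -/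
def orb (x : C) : Finset C := {x, f₀ x}

/-- The structure constant of the orbits of `x` and `y` at `z`, in a form that can be evaluated. -/
def N (x y z : C) : ℕ := ((orb x).filter fun u => u⁻¹ * z ∈ orb y).card

lemma σ_σ : ∀ x, σ (σ x) = x := by decide +kernel

lemma f₀_f₀ : Function.Involutive f₀ := by
  unfold Function.Involutive
  decide +kernel

lemma orb_one : orb 1 = {1} := by decide +kernel

lemma f₀_mul : ∀ x y, f₀ (x * y) = f₀ x * f₀ y := by decide +kernel

lemma f₀_inv : ∀ x, f₀ x⁻¹ = (f₀ x)⁻¹ := by decide +kernel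

lemma σ_f₀ : ∀ x, σ (f₀ x) ∈ orb (σ x) := by decide +kernel

lemma mem_orb {x y : C} : y ∈ orb x ↔ y = x ∨ y = f₀ x := by simp [orb]

/-- The obstruction: `p`, `q`, `r` play the roles of the images of `b`, `c`, `bc` under a
permutation that fixes `1` and induces the algebraic automorphism given by `σ`. The six pairs
among `1, b, c, bc` impose incompatible conditions. -/
lemma obstruction : ∀ p ∈ orb (σ (mk 0 1 0)), ∀ q ∈ orb (σ (mk 0 0 1)),
    ∀ r ∈ orb (σ (mk 0 1 1)), ¬ (r * p⁻¹ ∈ orb (σ (mk 0 0 1)) ∧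
      q * p⁻¹ ∈ orb (σ (mk 0 1 1)) ∧ r * q⁻¹ ∈ orb (σ (mk 0 1 0))) := by
  intro p hp q hq r hr
  rw [mem_orb] at hp hq hr
  rcases hp with rfl | rfl <;> rcases hq with rfl | rfl <;> rcases hr with rfl | rfl <;>
    decide +kernel

lemma self_mem_orb (x : C) : x ∈ orb x := mem_orb.2 (Or.inl rfl)

lemma orb_f₀ (x : C) : orb (f₀ x) = orb x := by
  ext y
  rw [mem_orb, mem_orb, f₀_f₀, or_comm]

lemma orb_eq {x y : C} (h : y ∈ orb x) : orb y = orb x := by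
  rcases mem_orb.1 h with rfl | rfl
  · rfl
  · exact orb_f₀ x

lemma σ_mem {x y : C} (h : y ∈ orb x) : σ y ∈ orb (σ x) := by
  rcases mem_orb.1 h with rfl | rfl
  · exact self_mem_orb _
  · exact σ_f₀ x

lemma σ_mem_iff {x y : C} : σ y ∈ orb (σ x) ↔ y ∈ orb x :=
  ⟨fun h => by simpa only [σ_σ] using σ_mem h, σ_mem⟩

lemma f₀_mem_iff {x y : C} : f₀ y ∈ orb x ↔ y ∈ orb x := by
  rw [mem_orb, mem_orb, f₀_f₀.injective.eq_iff, or_comm, f₀_f₀.eq_iff, eq_comm]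

lemma N_f₀ (x y z : C) : N x y (f₀ z) = N x y z := by
  refine Finset.card_bij' (fun u _ => f₀ u) (fun u _ => f₀ u) ?_ ?_ ?_ ?_
  · intro u hu
    rw [Finset.mem_filter] at hu ⊢
    refine ⟨f₀_mem_iff.2 hu.1, ?_⟩
    rw [← f₀_mem_iff, f₀_mul, f₀_inv, f₀_f₀]
    exact hu.2
  · intro u hu
    rw [Finset.mem_filter] at hu ⊢
    refine ⟨f₀_mem_iff.2 hu.1, ?_⟩
    rw [← f₀_inv, ← f₀_mul, f₀_mem_iff]
    exact hu.2
  · exact fun u _ => f₀_f₀ u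
  · exact fun u _ => f₀_f₀ u

lemma N_of_mem {x y z w : C} (h : w ∈ orb z) : N x y w = N x y z := by
  rcases mem_orb.1 h with rfl | rfl
  · rfl
  · exact N_f₀ x y z

/-- One representative from each of the ten orbits. -/
def reps : List C :=
  [mk 0 0 0, mk 1 0 0, mk 0 0 2, mk 1 0 2, mk 0 0 1, mk 0 0 3, mk 0 1 0, mk 1 1 0, mk 0 1 1,
    mk 1 1 1]

lemma exists_rep : ∀ x, ∃ r ∈ reps, x ∈ orb r := by decide +kernel

lemma N_σ_reps : ∀ x ∈ reps, ∀ y ∈ reps, ∀ z ∈ reps,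
    N (σ x) (σ y) (σ z) = N x y z := by decide +kernel

/-- The orbit permutation given by `σ` preserves structure constants. -/
lemma N_σ (x y z : C) : N (σ x) (σ y) (σ z) = N x y z := by
  obtain ⟨x', hx', hx⟩ := exists_rep x
  obtain ⟨y', hy', hy⟩ := exists_rep y
  obtain ⟨z', hz', hz⟩ := exists_rep z
  rw [N_of_mem hz, N_of_mem (σ_mem hz)]
  have h := N_σ_reps x' hx' y' hy' z' hz'
  unfold N at h ⊢
  rw [orb_eq hx, orb_eq hy, orb_eq (σ_mem hx), orb_eq (σ_mem hy), h]

/-! ### Transport to a group isomorphic to the model -/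

section Transport

variable {G H : Type*} [Group G] [Group H]

/-- The subset of `G` corresponding to the orbit of `x` under an identification `G ≃* C`. -/
def part (e : G ≃* C) (x : C) : Set G := {g | e g ∈ orb x}

lemma structConst_part (e : G ≃* C) (x y : C) (z : G) :
    structConst (part e x) (part e y) z = N x y (e z) := by
  unfold structConst N
  rw [← Fintype.card_coe, ← Nat.card_eq_fintype_card]
  refine Nat.card_congr
    { toFun := fun p => ⟨e p.1.1, ?_⟩
      invFun := fun u => ⟨(e.symm u.1, e.symm (u.1⁻¹ * e z)), ?_⟩
      left_inv := ?_
      right_inv := ?_ }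
  · obtain ⟨⟨p, q⟩, hp, hq, rfl⟩ := p
    rw [Finset.mem_filter]
    refine ⟨hp, ?_⟩
    change e q ∈ orb y at hq
    simpa using hq
  · obtain ⟨u, hu⟩ := u
    rw [Finset.mem_filter] at hu
    refine ⟨?_, ?_, ?_⟩
    · simpa [part] using hu.1
    · simpa [part] using hu.2
    · simp
  · rintro ⟨⟨p, q⟩, hp, hq, rfl⟩
    simp
  · rintro ⟨u, hu⟩
    simp

/-- The S-ring over `H` that corresponds to the orbits of `f₀`. -/
lemma exists_sRing [Finite H] (e : H ≃* C) : ∃ B : SRing H, B.parts = Set.range (part e) := by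
  refine ⟨⟨Set.range (part e), ?_, ?_, ?_, ?_, ?_, ?_⟩, rfl⟩
  · rintro _ ⟨x, rfl⟩
    exact ⟨e.symm x, by simpa [part] using self_mem_orb x⟩
  · exact fun g => ⟨_, ⟨e g, rfl⟩, self_mem_orb _⟩
  · rintro _ ⟨x, rfl⟩ _ ⟨y, rfl⟩ g hx hy
    have h : orb x = orb y := (orb_eq hx).symm.trans (orb_eq hy)
    simp only [part, h]
  · refine ⟨1, ?_⟩
    ext g
    simp [part, orb_one]
  · rintro _ ⟨x, rfl⟩
    refine ⟨x⁻¹, ?_⟩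
    ext g
    simp [part, mem_orb, f₀_inv, inv_eq_iff_eq_inv]
  · rintro _ ⟨x, rfl⟩ _ ⟨y, rfl⟩ _ ⟨z, rfl⟩ u hu v hv
    rw [structConst_part, structConst_part, N_of_mem hu, N_of_mem hv]

/-- The map on subsets given by `σ` under identifications of `G` and `H` with `C`. -/
def φ (e : G ≃* C) (e' : H ≃* C) (X : Set G) : Set H := {h | e.symm (σ (e' h)) ∈ X}

lemma φ_part (e : G ≃* C) (e' : H ≃* C) (x : C) : φ e e' (part e x) = part e' (σ x) := by
  ext h
  change e (e.symm (σ (e' h))) ∈ orb x ↔ e' h ∈ orb (σ x)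
  rw [e.apply_symm_apply, ← σ_mem_iff, σ_σ]

lemma isAlgIso_φ [Finite G] [Finite H] (e : G ≃* C) (e' : H ≃* C) (A : SRing G) (B : SRing H)
    (hA : A.parts = Set.range (part e)) (hB : B.parts = Set.range (part e')) :
    IsAlgIso A B (φ e e') := by
  constructor
  · rw [hA, hB]
    refine ⟨?_, ?_, ?_⟩
    · rintro _ ⟨x, rfl⟩
      exact ⟨σ x, (φ_part e e' x).symm⟩
    · intro X _ Y _ h
      ext g
      have := Set.ext_iff.1 h (e'.symm (σ (e g)))
      simpa [φ, σ_σ] using this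
    · rintro _ ⟨x, rfl⟩
      exact ⟨_, ⟨σ x, rfl⟩, by rw [φ_part, σ_σ]⟩
  · rw [hA]
    rintro _ ⟨x, rfl⟩ _ ⟨y, rfl⟩ _ ⟨z, rfl⟩ u hu v hv
    rw [φ_part] at hv
    rw [φ_part, φ_part, structConst_part, structConst_part, N_of_mem hu, N_of_mem hv, N_σ]

lemma not_inducedBy_φ [Finite G] (e : G ≃* C) (e' : H ≃* C) (A : SRing G)
    (hA : A.parts = Set.range (part e)) : ¬ ∃ g : G → H, InducedBy A (φ e e') g := by
  rintro ⟨g, -, hg⟩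
  -- `h` is `g` read in coordinates; it maps a difference in an orbit to one in the image orbit.
  let h : C → C := fun x => e' (g (e.symm x))
  have key : ∀ x d : C, h (d * x) * (h x)⁻¹ ∈ orb (σ d) := by
    intro x d
    have hd : (e.symm x, e.symm (d * x)) ∈ RSet (part e d) :=
      ⟨e.symm d, by simpa [part] using self_mem_orb d, by simp⟩
    have := hg (part e d) (hA ▸ ⟨d, rfl⟩)
    rw [φ_part] at this
    have hd' : (g (e.symm x), g (e.symm (d * x))) ∈ RSet (part e' (σ d)) := by
      rw [← this]
      exact ⟨_, hd, rfl⟩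
    obtain ⟨y, hy, hy'⟩ := hd'
    have hy'' : h (d * x) = e' y * h x := by
      simpa [h] using congrArg e' hy'
    rw [hy'', mul_inv_cancel_right]
    exact hy
  have e1 : mk 0 0 1 * mk 0 1 0 = mk 0 1 1 := by decide
  have e2 : mk 0 1 1 * mk 0 1 0 = mk 0 0 1 := by decide
  have e3 : mk 0 1 0 * mk 0 0 1 = mk 0 1 1 := by decide
  have k1 := key (mk 0 1 0) (mk 0 0 1)
  have k2 := key (mk 0 1 0) (mk 0 1 1)
  have k3 := key (mk 0 0 1) (mk 0 1 0)
  rw [e1] at k1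
  rw [e2] at k2
  rw [e3] at k3
  have b1 := key 1 (mk 0 1 0)
  have b2 := key 1 (mk 0 0 1)
  have b3 := key 1 (mk 0 1 1)
  rw [mul_one] at b1 b2 b3
  -- right translation by `(h 1)⁻¹` reduces to the case where `1` is fixed
  refine obstruction _ b1 _ b2 _ b3 ⟨?_, ?_, ?_⟩
  · simpa using k1
  · simpa using k2
  · simpa using k3

end Transport

/-! ### Coordinates on the given group -/

lemma pow_val {G : Type*} [Group G] {n : ℕ} {g : G} (hg : orderOf g = n) (m : ℕ) :
    g ^ (m : ZMod n).val = g ^ m := by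
  rw [ZMod.val_natCast, ← hg, pow_mod_orderOf]

lemma exists_coordinates (G : Type*) [CommGroup G] [Finite G] (a b c : G)
    (ha : orderOf a = 2) (hb : orderOf b = 2) (hc : orderOf c = 4)
    (hgen : ∀ g : G, ∃ i j k : ℕ, g = a ^ i * b ^ j * c ^ k) (hcard : Nat.card G = 16)
    (f : MulAut G) (hfa : f a = a) (hfb : f b = b * a * c ^ 2) (hfc : f c = c * a) :
    ∃ e : G ≃* C, ∀ g, e (f g) = f₀ (e g) := by
  let θ : C →* G :=
    { toFun := fun x => a ^ x.toAdd.1.val * b ^ x.toAdd.2.1.val * c ^ x.toAdd.2.2.val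
      map_one' := by simp
      map_mul' := by
        intro x y
        have hmod : ∀ {n : ℕ} {g : G}, orderOf g = n → ∀ m, g ^ (m % n) = g ^ m := by
          rintro _ g rfl m
          exact pow_mod_orderOf g m
        simp only [toAdd_mul, Prod.fst_add, Prod.snd_add, ZMod.val_add, hmod ha, hmod hb,
          hmod hc, pow_add]
        rw [mul_mul_mul_comm (a ^ _), mul_mul_mul_comm] }
  have θ_mk : ∀ i j k : ℕ, θ (mk i j k) = a ^ i * b ^ j * c ^ k := by
    intro i j k
    change a ^ (i : ZMod 2).val * b ^ (j : ZMod 2).val * c ^ (k : ZMod 4).val = _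
    rw [pow_val ha, pow_val hb, pow_val hc]
  have hsurj : Function.Surjective θ := by
    intro g
    obtain ⟨i, j, k, rfl⟩ := hgen g
    exact ⟨_, θ_mk i j k⟩
  have hbij : Function.Bijective θ := by
    refine hsurj.bijective_of_nat_card_le ?_
    rw [hcard]
    simp [C, Nat.card_eq_fintype_card]
  have hf : ∀ x, f (θ x) = θ (f₀ x) := by
    intro x
    obtain ⟨i, j, k, rfl⟩ : ∃ i j k : ℕ, x = mk i j k :=
      ⟨x.toAdd.1.val, x.toAdd.2.1.val, x.toAdd.2.2.val, by simp [mk]⟩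
    have hx : f₀ (mk i j k) = mk (i + j + k : ℕ) j (k + 2 * j : ℕ) := by
      have hk : ∀ k : ZMod 4, (k.val : ZMod 2) = ZMod.castHom (by decide : 2 ∣ 4) (ZMod 2) k := by
        decide
      have hj : ∀ j : ℕ, 2 * (((j : ZMod 2).val : ℕ) : ZMod 4) = 2 * (j : ZMod 4) := by
        intro j
        rw [ZMod.val_natCast]
        exact_mod_cast (ZMod.natCast_eq_natCast_iff _ _ 4).2
          (Nat.ModEq.mul_left' 2 (Nat.mod_modEq j 2))
      change mk ((i : ZMod 2) + j + ((k : ZMod 4).val : ZMod 2)) j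
        ((k : ZMod 4) + 2 * (((j : ZMod 2).val : ℕ) : ZMod 4)) = _
      rw [hk, hj, map_natCast]
      push_cast
      rfl
    rw [hx, θ_mk, θ_mk]
    simp only [map_mul, map_pow, hfa, hfb, hfc, mul_pow, pow_add, pow_mul]
    have hac : ∀ p q r s t u : G, p * (q * r * s) * (t * u) = p * r * u * q * (t * s) := by
      intros
      ac_rfl
    exact hac _ _ _ _ _ _
  refine ⟨(MulEquiv.ofBijective θ hbij).symm, fun g => ?_⟩
  obtain ⟨x, rfl⟩ := hsurj g
  rw [hf]
  have h : ∀ y, (MulEquiv.ofBijective θ hbij).symm (θ y) = y := fun y =>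
    (MulEquiv.ofBijective θ hbij).symm_apply_apply y
  rw [h, h]

/-- In coordinates, the orbits of `⟨f⟩` are the orbits of the involution `f₀`. -/
lemma cycParts_eq {G : Type*} [Group G] [Finite G] (f : MulAut G) (e : G ≃* C)
    (he : ∀ g, e (f g) = f₀ (e g)) (hf2 : orderOf f = 2) :
    cycParts (Subgroup.zpowers f) = Set.range (part e) := by
  have horb : ∀ g : G, {h : G | ∃ f' ∈ Subgroup.zpowers f, f' g = h} = part e (e g) := by
    intro g
    ext h
    constructor
    · rintro ⟨f', hf', rfl⟩
      obtain ⟨n, rfl⟩ := (Subgroup.mem_zpowers_iff).1 hf'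
      have hsq : f ^ (2 : ℤ) = 1 := by
        have := pow_orderOf_eq_one f
        rw [hf2] at this
        exact_mod_cast this
      rcases Int.even_or_odd' n with ⟨m, rfl | rfl⟩
      · rw [zpow_mul, hsq, one_zpow]
        exact self_mem_orb _
      · rw [zpow_add, zpow_mul, hsq, one_zpow, one_mul, zpow_one]
        exact mem_orb.2 (Or.inr (he g))
    · intro hh
      rcases mem_orb.1 hh with hh | hh
      · exact ⟨1, one_mem _, (e.injective hh).symm⟩
      · exact ⟨f, Subgroup.mem_zpowers f, e.injective ((he g).trans hh.symm)⟩
  ext X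
  constructor
  · rintro ⟨g, rfl⟩
    exact ⟨e g, (horb g).symm⟩
  · rintro ⟨x, rfl⟩
    exact ⟨e.symm x, by rw [horb, e.apply_symm_apply]⟩

end SRingPaper.C2C2C4

open SRingPaper in
/-- let `G = ⟨a⟩ × ⟨b⟩ × ⟨c⟩ ≅ C_2 × C_2 × C_4` with `|a| = |b| = 2`,
`|c| = 4`, and let `f` be the automorphism of `G` with `a ↦ a`, `b ↦ bac²`,
`c ↦ ca` (it has order 2).  Then the cyclotomic S-ring `A = cyc(⟨f⟩, G)` admits
an algebraic automorphism not induced by any combinatorial isomorphism; in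
particular `A` is not separable w.r.t. the class of finite abelian groups. -/
theorem cyclotomic_over_C2_C2_C4_nonseparable
    (G : Type*) [Group G] [Finite G]
    (hcomm : ∀ x y : G, x * y = y * x)
    (a b c : G)
    (ha : orderOf a = 2) (hb : orderOf b = 2) (hc : orderOf c = 4)
    (hgen : ∀ g : G, ∃ i j k : ℕ, g = a ^ i * b ^ j * c ^ k)
    (hcard : Nat.card G = 16)
    (f : MulAut G) (hf2 : orderOf f = 2)
    (hfa : f a = a) (hfb : f b = b * a * c ^ 2) (hfc : f c = c * a)
    (A : SRing G) (hA : A.parts = cycParts (Subgroup.zpowers f)) :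
    (∃ ψ : Set G → Set G, IsAlgIso A A ψ ∧ ¬ ∃ g : G → G, InducedBy A ψ g) ∧
      ¬ SepAbelian A := by
  obtain ⟨e, he⟩ := @C2C2C4.exists_coordinates G { (inferInstance : Group G) with mul_comm := hcomm }
    _ a b c ha hb hc hgen hcard f hfa hfb hfc
  have hA' := hA.trans (C2C2C4.cycParts_eq f e he hf2)
  refine ⟨⟨C2C2C4.φ e e, C2C2C4.isAlgIso_φ e e A A hA' hA',
    C2C2C4.not_inducedBy_φ e e A hA'⟩, fun hsep => ?_⟩
  -- `SepAbelian` quantifies over groups in an arbitrary universe, so the model is lifted there.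
  let u : ULift C2C2C4.C ≃* C2C2C4.C := MulEquiv.ulift
  obtain ⟨B, hB⟩ := C2C2C4.exists_sRing u
  exact C2C2C4.not_inducedBy_φ e u A hA'
    (hsep _ B _ (C2C2C4.isAlgIso_φ e u A B hA' hB))
end

section
/- Let G = ⟨a⟩ × ⟨b⟩ × ⟨c⟩ with |a| = |b| = 3 and |c| = 9 (so G ≅ C_3 × C_3 × C_9), and let f₁, f₂, f₃ be the automorphisms of G determined by f₁: (a,b,c) ↦ (a⁻¹, b⁻¹, c⁻¹), f₂: (a,b,c) ↦ (a, b, c·c³), f₃: (a,b,c) ↦ (a, ba, c); these pairwise commute with |f₁| = 2 and |f₂| = |f₃| = 3. Put K = ⟨f₁⟩ × ⟨f₂⟩ × ⟨f₃⟩. Then the cyclotomic S-ring 𝒜 = cyc(K, G) admits an algebraic automorphism that is not induced by any combinatorial isomorphism; in particular, 𝒜 is not separable with respect to the class 𝒦_A of finite abelian groups. -/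
/-!
Write `G` additively as `ZMod 3 × ZMod 3 × ZMod 9`, and let `d = c³`. Up to the sign change `f₁`,
a basic set is a product `S × T`, where `S` is a point of `⟨a⟩` or a nontrivial coset of `⟨a⟩` in
`⟨a, b⟩`, and `T` is a point of `⟨d⟩` or a nontrivial coset of `⟨d⟩` in `⟨c⟩`. There are four kinds
of basic sets with both `S` and `T` nontrivial, each comprising exactly two basic sets (`kind`).
The exotic map `flip` exchanges the two basic sets of the kind "`S` in `⟨a⟩`, `T` in `⟨d⟩`" and
fixes every other basic set.

*It is algebraic.* A structure constant involves three basic sets, hence misses one of the four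
kinds, say `i`. Exchanging the two basic sets within kind `1` and also within kind `i` is induced
by an explicit bijection of `G` (`model i`), and bijections of this sort preserve structure
constants (`structConst_model`). Since the map agrees with this one on the three given basic
sets (`flip_rel_model`), it preserves the structure constant as well.

*It is not induced.* If `g` induces it, translate so that `g 0 = 0`. Then `g` sends each of
`a, d, b, c` to plus or minus itself (modulo `⟨a⟩` for `b` and `⟨d⟩` for `c`). The three fixed
kinds force equal signs for the pairs `(a, c)`, `(b, d)`, `(b, c)`, while the exchanged kind
forces opposite signs for `(a, d)`, a contradiction (`no_signs`).

Composing with an isomorphism onto an abelian group in an arbitrary universe refutes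
separability (`not_sepAbelian`).
-/

open scoped Pointwise

namespace C3C3C9

/-! ### The orbit partition in coordinates, and the finite checks -/

/-- The group `C_3 × C_3 × C_9`, written additively; `a`, `b`, `c` are the three unit vectors. -/
abbrev M : Type := ZMod 3 × ZMod 3 × ZMod 9

/-- A representative of the orbit of multiplication by `4` on `ZMod 9`. The cube `k ^ 3` is the
element of `{0, 1, -1}` congruent to `k` modulo `3`, so that `rep9 (-k) = -rep9 k`. -/
def rep9 (k : ZMod 9) : ZMod 9 := if 3 * k = 0 then k else k ^ 3

/-- A representative of the orbit of `⟨f₂, f₃⟩` through `x`, compatible with negation. -/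
def rep (x : M) : M := (if x.2.1 = 0 then x.1 else 0, x.2.1, rep9 x.2.2)

/-- Two elements lie in the same orbit of `K = ⟨f₁, f₂, f₃⟩`. -/
def Rel (x y : M) : Prop := rep x = rep y ∨ rep x = -rep y

instance (x y : M) : Decidable (Rel x y) := by unfold Rel; infer_instance

lemma Rel.refl (x : M) : Rel x x := Or.inl rfl

lemma Rel.symm {x y : M} (h : Rel x y) : Rel y x := by
  rcases h with h | h
  · exact Or.inl h.symm
  · exact Or.inr (by rw [h, neg_neg])

lemma Rel.trans {x y z : M} (h : Rel x y) (h' : Rel y z) : Rel x z := by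
  unfold Rel at *
  rcases h with h | h <;> rcases h' with h' | h' <;> rw [h, h'] <;> simp

/-- The kind of a basic set. The kinds `1, 2, 3, 4` are those whose elements project nontrivially
to both `⟨a, b⟩` and `⟨c⟩`, according to whether these projections lie in `⟨a⟩` and `⟨c³⟩`;
each of these kinds consists of exactly two basic sets. All other basic sets have kind `0`. -/
def kind (x : M) : Fin 5 :=
  if (x.1 = 0 ∧ x.2.1 = 0) ∨ x.2.2 = 0 then 0
  else if x.2.1 = 0 then (if 3 * x.2.2 = 0 then 1 else 2)
  else (if 3 * x.2.2 = 0 then 3 else 4)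

/-- The permutation defining the exotic algebraic automorphism: it exchanges the two basic sets
of kind `1` and is the identity elsewhere. -/
def flip (x : M) : M := if kind x = 1 then (-x.1, x.2) else x

/-- The involution `k₀ + 3 k₁ ↦ k₀ - 3 k₁` of `ZMod 9`, where `k₀ ∈ {0, 1, -1}`. -/
def beta (k : ZMod 9) : ZMod 9 := 2 * k ^ 3 - k

/-- Combinatorial automorphisms of the S-ring. For `i = 1` this is the identity; for
`i = 2, 3, 4` it exchanges the two basic sets of kind `1` as well as the two of kind `i`, and
fixes all the others. -/
def model (i : Fin 5) (x : M) : M :=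
  if i = 2 then (-x.1, x.2)
  else if i = 3 then (x.1, x.2.1, beta x.2.2)
  else if i = 4 then (-x.1, x.2.1, -beta x.2.2)
  else x

lemma flip_invol (x : M) : flip (flip x) = x := by
  revert x; decide +kernel

/-- A map compatible with representatives and with negation permutes the basic sets. -/
lemma rel_map {g : M → M} (hr : ∀ x, rep (g x) = rep (g (rep x)))
    (hn : ∀ x, rep (g (-x)) = -rep (g x)) {x y : M} (h : Rel x y) : Rel (g x) (g y) := by
  rcases h with h | h
  · exact Or.inl (by rw [hr x, h, ← hr y])
  · exact Or.inr (by rw [hr x, h, hn, ← hr y])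

lemma flip_rel {x y : M} (h : Rel x y) : Rel (flip x) (flip y) :=
  rel_map (by decide +kernel) (by decide +kernel) h

lemma model_invol (i : Fin 5) : Function.Involutive (model i) := by
  intro x; revert i x; decide +kernel

lemma model_rel (i : Fin 5) {x y : M} (h : Rel x y) : Rel (model i x) (model i y) :=
  rel_map (by revert i; decide +kernel) (by revert i; decide +kernel) h

lemma rep9_beta_sub : ∀ k l : ZMod 9, rep9 (beta l - beta k) = rep9 (beta (l - k)) := by
  decide +kernel

lemma rep9_neg_beta_sub : ∀ k l : ZMod 9, rep9 (-beta l - -beta k) = rep9 (-beta (l - k)) := by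
  decide +kernel

lemma model_sub (i : Fin 5) (x y : M) : Rel (model i y - model i x) (model i (y - x)) := by
  have hs : -y.1 - -x.1 = -(y.1 - x.1) := by ring
  left
  unfold model
  split_ifs
  · simp [rep, hs]
  · simp [rep, rep9_beta_sub]
  · simp only [rep, Prod.fst_sub, Prod.snd_sub, hs, rep9_neg_beta_sub]
  · rfl

/-- On basic sets that are not of kind `i`, the exotic map agrees with an induced one. -/
lemma flip_rel_model (i : Fin 5) (hi : i ≠ 0) (x : M) (h : kind x ≠ i) :
    Rel (flip x) (model i x) := by
  revert i x; decide +kernel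

lemma exists_unused_kind (p q s : Fin 5) : ∃ i : Fin 5, i ≠ 0 ∧ p ≠ i ∧ q ≠ i ∧ s ≠ i := by
  revert p q s; decide +kernel

/-- The sign obstruction: the images (relative to the image of the origin) of `a`, `c³`, `c`, `b`
each carry a sign; kinds `2`, `3`, `4` force the signs of `a, c`, of `b, c³` and of `b, c`
to agree, while the exchange in kind `1` forces those of `a, c³` to differ. -/
lemma no_signs : ∀ pa : M, Rel pa (flip (1, 0, 0)) → ∀ pd : M, Rel pd (flip (0, 0, 3)) →
    Rel (pa - pd) (flip ((1, 0, 0) - (0, 0, 3))) →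
    ∀ pc : M, Rel pc (flip (0, 0, 1)) → Rel (pc - pa) (flip ((0, 0, 1) - (1, 0, 0))) →
    ∀ pb : M, Rel pb (flip (0, 1, 0)) → Rel (pb - pd) (flip ((0, 1, 0) - (0, 0, 3))) →
    ¬ Rel (pb - pc) (flip ((0, 1, 0) - (0, 0, 1))) := by
  decide +kernel

open SRingPaper

/-! ### The exotic algebraic automorphism -/

section Core

variable {G : Type*}

/-- The basic set of `m`, transported to `G` by `e`. -/
def cell (e : M → G) (m : M) : Set G := e '' {y | Rel y m}

lemma mem_cell {e : M → G} (he : Function.Bijective e) {x m : M} :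
    e x ∈ cell e m ↔ Rel x m := by
  constructor
  · rintro ⟨y, hy, h⟩
    rwa [← he.1 h]
  · exact fun h => ⟨x, h, rfl⟩

lemma cell_eq {e : M → G} {x y : M} (h : Rel x y) : cell e x = cell e y := by
  unfold cell
  congr 1
  ext z
  exact ⟨fun k => Rel.trans k h, fun k => Rel.trans k h.symm⟩

variable [Group G]

lemma structConst_cell {e : M → G} (he : Function.Bijective e)
    (hadd : ∀ x y, e (x + y) = e x * e y) (x y z : M) :
    structConst (cell e x) (cell e y) (e z) = Nat.card {v : M // Rel (z - v) x ∧ Rel v y} := by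
  symm
  apply Nat.card_congr
  refine Equiv.ofBijective (fun v => ⟨(e (z - v.1), e v.1), (mem_cell he).2 v.2.1,
    (mem_cell he).2 v.2.2, by rw [← hadd, sub_add_cancel]⟩) ⟨?_, ?_⟩
  · intro v w h
    have h2 := congrArg (fun p => p.1.2) h
    exact Subtype.ext (he.1 h2)
  · rintro ⟨⟨p, q⟩, hp, hq, hz⟩
    obtain ⟨u, rfl⟩ := he.2 p
    obtain ⟨v, rfl⟩ := he.2 q
    have hz' : u + v = z := he.1 ((hadd u v).trans hz)
    subst hz'
    refine ⟨⟨v, ?_, (mem_cell he).1 hq⟩, ?_⟩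
    · rw [add_sub_cancel_right]
      exact (mem_cell he).1 hp
    · simp

lemma structConst_model {e : M → G} (he : Function.Bijective e)
    (hadd : ∀ x y, e (x + y) = e x * e y) (i : Fin 5) (x y z : M) :
    structConst (cell e x) (cell e y) (e z) =
      structConst (cell e (model i x)) (cell e (model i y)) (e (model i z)) := by
  have key : ∀ u v, Rel (model i u) (model i v) ↔ Rel u v := fun u v =>
    ⟨fun h => by simpa only [model_invol i _] using model_rel i h, model_rel i⟩
  rw [structConst_cell he hadd, structConst_cell he hadd]
  apply Nat.card_congr
  refine Equiv.subtypeEquiv (model_invol i).toPerm fun v => ?_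
  have h1 : Rel (model i z - model i v) (model i x) ↔ Rel (z - v) x := by
    rw [← key (z - v) x]
    exact ⟨fun h => (model_sub i v z).symm.trans h, fun h => (model_sub i v z).trans h⟩
  simp only [Function.Involutive.coe_toPerm, h1, key]

variable [Finite G]

/-- The exotic algebraic automorphism and its non-inducedness, for an S-ring whose basic sets
are the cells. -/
theorem exists_exotic (A : SRing G) (e : M → G) (he : Function.Bijective e)
    (hadd : ∀ x y, e (x + y) = e x * e y) (hA : A.parts = Set.range (cell e)) :
    ∃ ψ : Set G → Set G, IsAlgIso A A ψ ∧ ¬ ∃ g : G → G, InducedBy A ψ g := by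
  let ψ : Set G → Set G := fun X => e '' (flip '' (e ⁻¹' X))
  have hψ : ∀ m, ψ (cell e m) = cell e (flip m) := by
    intro m
    change e '' (flip '' (e ⁻¹' (e '' {y | Rel y m}))) = e '' {y | Rel y (flip m)}
    rw [Set.preimage_image_eq _ he.1]
    congr 1
    ext y
    constructor
    · rintro ⟨z, hz, rfl⟩
      exact flip_rel hz
    · intro hy
      refine ⟨flip y, ?_, flip_invol y⟩
      simpa only [flip_invol, Set.mem_ofPred_eq] using flip_rel hy
  have hinv : ∀ m, ψ (ψ (cell e m)) = cell e m := fun m => by rw [hψ, hψ, flip_invol]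
  have hmem : ∀ m, cell e m ∈ A.parts := fun m => hA ▸ ⟨m, rfl⟩
  refine ⟨ψ, ⟨⟨?_, ?_, ?_⟩, ?_⟩, ?_⟩
  · rw [hA]
    rintro _ ⟨m, rfl⟩
    exact ⟨flip m, (hψ m).symm⟩
  · rw [hA]
    rintro _ ⟨m, rfl⟩ _ ⟨n, rfl⟩ h
    rw [← hinv m, h, hinv n]
  · rw [hA]
    rintro _ ⟨m, rfl⟩
    exact ⟨cell e (flip m), ⟨flip m, rfl⟩, by rw [hψ, flip_invol]⟩
  · intro X hX Y hY Z hZ z hz z' hz'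
    rw [hA] at hX hY hZ
    obtain ⟨x, rfl⟩ := hX
    obtain ⟨y, rfl⟩ := hY
    obtain ⟨m, rfl⟩ := hZ
    obtain ⟨i, hi, hx, hy, hm⟩ := exists_unused_kind (kind x) (kind y) (kind m)
    rw [hψ] at hz' ⊢
    rw [hψ]
    rw [cell_eq (flip_rel_model i hi x hx), cell_eq (flip_rel_model i hi y hy)]
    rw [cell_eq (flip_rel_model i hi m hm)] at hz'
    rw [A.structConst_const _ (hmem x) _ (hmem y) _ (hmem m) z hz (e m)
        ((mem_cell he).2 (Rel.refl m)),
      A.structConst_const _ (hmem _) _ (hmem _) _ (hmem (model i m)) z' hz' (e (model i m))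
        ((mem_cell he).2 (Rel.refl _))]
    exact structConst_model he hadd i x y m
  · rintro ⟨g, -, hg⟩
    choose h hh using fun u : M => he.2 (g (e u))
    have key : ∀ u v : M, Rel (h v - h u) (flip (v - u)) := by
      intro u v
      have h1 : (e u, e v) ∈ RSet (cell e (v - u)) :=
        ⟨e (v - u), (mem_cell he).2 (Rel.refl _), by
          change e v = e (v - u) * e u
          rw [← hadd, sub_add_cancel]⟩
      have h2 : (g (e u), g (e v)) ∈ mapRel g (RSet (cell e (v - u))) := ⟨_, h1, rfl⟩
      rw [hg _ (hmem _), hψ] at h2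
      obtain ⟨w, hw, h3⟩ := h2
      obtain ⟨w, rfl⟩ := he.2 w
      have h4 : e (h v) = e (w + h u) := by
        rw [hadd, hh, hh]
        exact h3
      rw [he.1 h4, add_sub_cancel_right]
      exact (mem_cell he).1 hw
    have k0 : ∀ v : M, Rel (h v - h 0) (flip v) := fun v => by simpa using key 0 v
    have k1 : ∀ u v : M, Rel ((h v - h 0) - (h u - h 0)) (flip (v - u)) := fun u v => by
      simpa using key u v
    exact no_signs _ (k0 _) _ (k0 _) (k1 _ _) _ (k0 _) (k1 _ _) _ (k0 _) (k1 _ _) (k1 _ _)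

end Core

/-! ### Coordinates on `G` and the orbits of `K` -/

lemma pow_val_add {G : Type*} [Group G] {n : ℕ} [NeZero n] (g : G) (hg : orderOf g = n)
    (i j : ZMod n) : g ^ (i + j).val = g ^ i.val * g ^ j.val := by
  rw [ZMod.val_add, ← pow_add]
  subst hg
  exact pow_mod_orderOf g _

lemma pow_val_natCast {G : Type*} [Group G] {n : ℕ} [NeZero n] (g : G) (hg : orderOf g = n)
    (i : ℕ) : g ^ (i : ZMod n).val = g ^ i := by
  rw [ZMod.val_natCast]
  subst hg
  exact pow_mod_orderOf g _

lemma rel_neg (x : M) : Rel (-x) x := by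
  revert x; decide +kernel

lemma rel_four (x : M) : Rel (x.1, x.2.1, 4 * x.2.2) x := by
  revert x; decide +kernel

lemma rel_shear (x : M) : Rel (x.1 + x.2.1, x.2) x := by
  revert x; decide +kernel

lemma rep_eq (x : M) : ∃ p q : Fin 3,
    rep x = (x.1 + p.val * x.2.1, x.2.1, 4 ^ q.val * x.2.2) := by
  revert x; decide +kernel

/-! ### Transport of S-rings along group isomorphisms -/

lemma structConst_image {G H : Type*} [Group G] [Group H] (θ : G ≃* H) (X Y : Set G) (z : G) :
    structConst (θ '' X) (θ '' Y) (θ z) = structConst X Y z := by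
  symm
  apply Nat.card_congr
  refine Equiv.subtypeEquiv (Equiv.prodCongr θ.toEquiv θ.toEquiv) ?_
  rintro ⟨x, y⟩
  simp [← map_mul]

/-- The image of an S-ring under a group isomorphism. -/
def mapSRing {G H : Type*} [Group G] [Finite G] [Group H] [Finite H] (θ : G ≃* H)
    (A : SRing G) : SRing H where
  parts := (fun X => θ '' X) '' A.parts
  nonempty_mem := by
    rintro _ ⟨X, hX, rfl⟩
    exact (A.nonempty_mem X hX).image _
  exists_mem := by
    intro h
    obtain ⟨X, hX, hm⟩ := A.exists_mem (θ.symm h)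
    exact ⟨_, ⟨X, hX, rfl⟩, _, hm, θ.apply_symm_apply h⟩
  eq_of_mem := by
    rintro _ ⟨X, hX, rfl⟩ _ ⟨Y, hY, rfl⟩ _ ⟨x, hx, rfl⟩ h
    rw [A.eq_of_mem X hX Y hY x hx (θ.injective.mem_set_image.1 h)]
  one_mem := ⟨_, A.one_mem, by simp⟩
  inv_mem := by
    rintro _ ⟨X, hX, rfl⟩
    exact ⟨_, A.inv_mem X hX, Set.image_inv θ X⟩
  structConst_const := by
    rintro _ ⟨X, hX, rfl⟩ _ ⟨Y, hY, rfl⟩ _ ⟨Z, hZ, rfl⟩ _ ⟨z, hz, rfl⟩ _ ⟨z', hz', rfl⟩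
    rw [structConst_image, structConst_image]
    exact A.structConst_const X hX Y hY Z hZ z hz z' hz'

lemma mapRel_RSet {G H : Type*} [Group G] [Group H] (θ : G ≃* H) (X : Set G) :
    mapRel θ (RSet X) = RSet (θ '' X) := by
  ext ⟨u, v⟩
  constructor
  · rintro ⟨⟨p, q⟩, ⟨x, hx, h⟩, h'⟩
    obtain ⟨rfl, rfl⟩ := Prod.mk.inj h'
    exact ⟨θ x, ⟨x, hx, rfl⟩, by simp_all⟩
  · rintro ⟨_, ⟨x, hx, rfl⟩, h⟩
    refine ⟨(θ.symm u, x * θ.symm u), ⟨x, hx, rfl⟩, ?_⟩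
    simp_all

/-- A non-induced algebraic automorphism, followed by a group isomorphism onto an abelian group
in the required universe, refutes separability. -/
lemma not_sepAbelian.{u, v} {G : Type u} [Group G] [Finite G] {H : Type v} [CommGroup H] [Finite H]
    (θ : G ≃* H) (A : SRing G) (ψ : Set G → Set G) (hψ : IsAlgIso A A ψ)
    (hn : ¬ ∃ g : G → G, InducedBy A ψ g) : ¬ SepAbelian.{u, v} A := by
  intro hsep
  have hbij : Set.BijOn (fun X : Set G => θ '' X) A.parts (mapSRing θ A).parts :=
    (θ.injective.image_injective.injOn).bijOn_image
  obtain ⟨f, hf, hf'⟩ := hsep H (mapSRing θ A) (fun X => θ '' ψ X) ⟨hbij.comp hψ.bijOn, by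
    rintro X hX Y hY Z hZ z hz _ ⟨z', hz', rfl⟩
    rw [structConst_image]
    exact hψ.structConst_eq X hX Y hY Z hZ z hz z' hz'⟩
  refine hn ⟨θ.symm ∘ f, θ.symm.bijective.comp hf, fun X hX => ?_⟩
  rw [mapRel_comp, hf' X hX, mapRel_RSet, Set.image_image]
  simp

end C3C3C9

open SRingPaper in
/-- let `G = ⟨a⟩ × ⟨b⟩ × ⟨c⟩ ≅ C_3 × C_3 × C_9` with
`|a| = |b| = 3`, `|c| = 9`, and let `f₁, f₂, f₃` be the automorphisms of `G`
with `f₁ : (a,b,c) ↦ (a⁻¹, b⁻¹, c⁻¹)`, `f₂ : (a,b,c) ↦ (a, b, c·c³)`,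
`f₃ : (a,b,c) ↦ (a, ba, c)`; they pairwise commute, `|f₁| = 2`,
`|f₂| = |f₃| = 3`.  With `K = ⟨f₁, f₂, f₃⟩`, the cyclotomic S-ring
`A = cyc(K, G)` admits an algebraic automorphism not induced by any
combinatorial isomorphism; in particular `A` is not separable w.r.t. the class
of finite abelian groups. -/
theorem cyclotomic_over_C3_C3_C9_nonseparable
    (G : Type*) [Group G] [Finite G]
    (hcomm : ∀ x y : G, x * y = y * x)
    (a b c : G)
    (ha : orderOf a = 3) (hb : orderOf b = 3) (hc : orderOf c = 9)
    (hgen : ∀ g : G, ∃ i j k : ℕ, g = a ^ i * b ^ j * c ^ k)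
    (hcard : Nat.card G = 81)
    (f₁ f₂ f₃ : MulAut G)
    (hf₁ : f₁ a = a⁻¹ ∧ f₁ b = b⁻¹ ∧ f₁ c = c⁻¹)
    (hf₂ : f₂ a = a ∧ f₂ b = b ∧ f₂ c = c * c ^ 3)
    (hf₃ : f₃ a = a ∧ f₃ b = b * a ∧ f₃ c = c)
    (horders : orderOf f₁ = 2 ∧ orderOf f₂ = 3 ∧ orderOf f₃ = 3)
    (hcommute : Commute f₁ f₂ ∧ Commute f₁ f₃ ∧ Commute f₂ f₃)
    (A : SRing G) (hA : A.parts = cycParts (Subgroup.closure {f₁, f₂, f₃})) :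
    (∃ ψ : Set G → Set G, IsAlgIso A A ψ ∧ ¬ ∃ g : G → G, InducedBy A ψ g) ∧
      ¬ SepAbelian A := by
  classical
  have hcm : ∀ x y : G, Commute x y := hcomm
  let e : C3C3C9.M → G := fun x => a ^ x.1.val * b ^ x.2.1.val * c ^ x.2.2.val
  have hadd : ∀ x y, e (x + y) = e x * e y := by
    intro x y
    change a ^ (x.1 + y.1).val * b ^ (x.2.1 + y.2.1).val * c ^ (x.2.2 + y.2.2).val =
      a ^ x.1.val * b ^ x.2.1.val * c ^ x.2.2.val * (a ^ y.1.val * b ^ y.2.1.val * c ^ y.2.2.val)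
    rw [C3C3C9.pow_val_add a ha, C3C3C9.pow_val_add b hb, C3C3C9.pow_val_add c hc]
    let : CommGroup G := { ‹Group G› with mul_comm := hcomm }
    rw [mul_mul_mul_comm (a ^ x.1.val * b ^ x.2.1.val), mul_mul_mul_comm (a ^ x.1.val)]
  have hsurj : Function.Surjective e := by
    intro g
    obtain ⟨i, j, k, rfl⟩ := hgen g
    refine ⟨(i, j, k), ?_⟩
    change a ^ (i : ZMod 3).val * b ^ (j : ZMod 3).val * c ^ (k : ZMod 9).val = _
    rw [C3C3C9.pow_val_natCast a ha, C3C3C9.pow_val_natCast b hb, C3C3C9.pow_val_natCast c hc]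
  have he : Function.Bijective e := by
    have := Fintype.ofFinite G
    refine (Fintype.bijective_iff_surjective_and_card e).2 ⟨hsurj, ?_⟩
    rw [← Nat.card_eq_fintype_card (α := G), hcard]
    simp
  have hzero : e 0 = 1 := by
    have := hadd 0 0
    simpa using this
  have hneg : ∀ x, e (-x) = (e x)⁻¹ := fun x =>
    eq_inv_of_mul_eq_one_left (by rw [← hadd, neg_add_cancel, hzero])
  have h₁ : ∀ x, f₁ (e x) = e (-x) := by
    intro x
    rw [hneg]
    change f₁ (a ^ x.1.val * b ^ x.2.1.val * c ^ x.2.2.val) =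
      (a ^ x.1.val * b ^ x.2.1.val * c ^ x.2.2.val)⁻¹
    let : CommGroup G := { ‹Group G› with mul_comm := hcomm }
    rw [map_mul, map_mul, map_pow, map_pow, map_pow, hf₁.1, hf₁.2.1, hf₁.2.2, inv_pow, inv_pow,
      inv_pow, mul_inv, mul_inv]
  have h₂ : ∀ x : C3C3C9.M, f₂ (e x) = e (x.1, x.2.1, 4 * x.2.2) := by
    intro x
    change f₂ (a ^ x.1.val * b ^ x.2.1.val * c ^ x.2.2.val) =
      a ^ x.1.val * b ^ x.2.1.val * c ^ (4 * x.2.2).val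
    have h4 : (4 * x.2.2 : ZMod 9) = ((4 * x.2.2.val : ℕ) : ZMod 9) := by simp
    rw [map_mul, map_mul, map_pow, map_pow, map_pow, hf₂.1, hf₂.2.1, hf₂.2.2, h4,
      C3C3C9.pow_val_natCast c hc, ← pow_succ', ← pow_mul]
  have h₃ : ∀ x : C3C3C9.M, f₃ (e x) = e (x.1 + x.2.1, x.2) := by
    intro x
    change f₃ (a ^ x.1.val * b ^ x.2.1.val * c ^ x.2.2.val) =
      a ^ (x.1 + x.2.1).val * b ^ x.2.1.val * c ^ x.2.2.val
    rw [map_mul, map_mul, map_pow, map_pow, map_pow, hf₃.1, hf₃.2.1, hf₃.2.2,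
      C3C3C9.pow_val_add a ha, (hcm b a).mul_pow, hcomm (b ^ _) (a ^ _), ← mul_assoc]
  -- `K`-orbits correspond to `Rel`-classes: generators preserve `Rel`, and conversely every
  -- element is moved to its representative by `f₂` and `f₃`, with `f₁` supplying the sign.
  set K := Subgroup.closure {f₁, f₂, f₃} with hK
  have m₁ : f₁ ∈ K := Subgroup.subset_closure (by simp)
  have m₂ : f₂ ∈ K := Subgroup.subset_closure (by simp)
  have m₃ : f₃ ∈ K := Subgroup.subset_closure (by simp)
  have hfwd : ∀ f ∈ K, ∀ x, ∃ y, f (e x) = e y ∧ C3C3C9.Rel y x := by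
    intro f hf
    induction hf using Subgroup.closure_induction with
    | mem f hf =>
      intro x
      rcases hf with rfl | rfl | rfl
      · exact ⟨_, h₁ x, C3C3C9.rel_neg x⟩
      · exact ⟨_, h₂ x, C3C3C9.rel_four x⟩
      · exact ⟨_, h₃ x, C3C3C9.rel_shear x⟩
    | one => exact fun x => ⟨x, rfl, C3C3C9.Rel.refl x⟩
    | mul f g _ _ ihf ihg =>
      intro x
      obtain ⟨y, hy, hyx⟩ := ihg x
      obtain ⟨z, hz, hzy⟩ := ihf y
      exact ⟨z, by rw [MulAut.mul_apply, hy, hz], hzy.trans hyx⟩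
    | inv f _ ih =>
      intro x
      obtain ⟨y, hy⟩ := hsurj (f⁻¹ (e x))
      obtain ⟨z, hz, hzy⟩ := ih y
      have hxz : x = z := he.1 (by rw [← hz, hy, MulAut.apply_inv_self])
      exact ⟨y, hy.symm, hxz ▸ hzy.symm⟩
  have p₂ : ∀ (q : ℕ) (x : C3C3C9.M), (f₂ ^ q) (e x) = e (x.1, x.2.1, 4 ^ q * x.2.2) := by
    intro q
    induction q with
    | zero => intro x; simp
    | succ q ih =>
      intro x
      rw [pow_succ', MulAut.mul_apply, ih, h₂, pow_succ', mul_assoc]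
  have p₃ : ∀ (p : ℕ) (x : C3C3C9.M), (f₃ ^ p) (e x) = e (x.1 + p * x.2.1, x.2) := by
    intro p
    induction p with
    | zero => intro x; simp
    | succ p ih =>
      intro x
      rw [pow_succ', MulAut.mul_apply, ih, h₃]
      congr 2
      push_cast
      ring
  have hrep : ∀ x, ∃ f ∈ K, f (e x) = e (C3C3C9.rep x) := by
    intro x
    obtain ⟨p, q, h⟩ := C3C3C9.rep_eq x
    refine ⟨f₂ ^ q.val * f₃ ^ p.val, K.mul_mem (K.pow_mem m₂ _) (K.pow_mem m₃ _), ?_⟩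
    rw [MulAut.mul_apply, p₃, p₂, h]
  have hback : ∀ x y, C3C3C9.Rel y x → ∃ f ∈ K, f (e x) = e y := by
    intro x y h
    obtain ⟨f, hf, hfx⟩ := hrep x
    obtain ⟨g, hg, hgy⟩ := hrep y
    have hgy' : g⁻¹ (e (C3C3C9.rep y)) = e y := by rw [← hgy, MulAut.inv_apply_self]
    rcases h with h | h
    · exact ⟨g⁻¹ * f, K.mul_mem (K.inv_mem hg) hf, by rw [MulAut.mul_apply, hfx, ← h, hgy']⟩
    · exact ⟨g⁻¹ * (f₁ * f), K.mul_mem (K.inv_mem hg) (K.mul_mem m₁ hf), by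
        rw [MulAut.mul_apply, MulAut.mul_apply, hfx, h₁, ← h, hgy']⟩
  have horb : ∀ x, {h : G | ∃ f ∈ K, f (e x) = h} = C3C3C9.cell e x := by
    intro x
    ext g
    constructor
    · rintro ⟨f, hf, rfl⟩
      obtain ⟨y, hy, hyx⟩ := hfwd f hf x
      exact ⟨y, hyx, hy.symm⟩
    · rintro ⟨y, hyx, rfl⟩
      exact hback x y hyx
  have hparts : A.parts = Set.range (C3C3C9.cell e) := by
    rw [hA]
    ext X
    constructor
    · rintro ⟨g, rfl⟩
      obtain ⟨x, rfl⟩ := hsurj g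
      exact ⟨x, (horb x).symm⟩
    · rintro ⟨x, rfl⟩
      exact ⟨e x, (horb x).symm⟩
  obtain ⟨ψ, hψ, hn⟩ := C3C3C9.exists_exotic A e he hadd hparts
  refine ⟨⟨ψ, hψ, hn⟩, ?_⟩
  -- `ULift` places a copy of the abelian group in the universe over which separability quantifies
  let θ : Multiplicative C3C3C9.M ≃* G :=
    MulEquiv.mk' (Multiplicative.toAdd.trans (Equiv.ofBijective e he))
      fun x y => hadd x.toAdd y.toAdd
  exact C3C3C9.not_sepAbelian (θ.symm.trans MulEquiv.ulift.symm) A ψ hψ hn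
end
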